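/- Let n ∈ ℕ, n ≥ 2, ℓ ∈ ℕ₀, and c ∈ ℝ. The operator τ_{2,n,ℓ}(c) with domain C₀^∞((0,∞)) is essentially self-adjoint in L²((0,∞); dr) if and only if c ≥ γ_{2,n,ℓ}. -/

import Mathlib

open MeasureTheory

noncomputable section

/-- A densely defined operator `T` in a complex Hilbert space is *essentially self-adjoint*
if its adjoint `T*` is self-adjoint (equivalently, its closure is self-adjoint). -/
def EssentiallySelfAdjoint {H : Type*} [NormedAddCommGroup H] [InnerProductSpace ℂ H]
    [CompleteSpace H] (T : H →ₗ.[ℂ] H) : Prop :=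
  Dense (T.domain : Set H) ∧ IsSelfAdjoint T.adjoint

/-- Lebesgue measure on `(0,∞)`. -/
def lebIoi : Measure ℝ := volume.restrict (Set.Ioi 0)

/-- The graph of the operator given by a formal differential expression `L` with domain
`C₀^∞((0,∞))`, as a subspace of `L²((0,∞); dr) × L²((0,∞); dr)`. -/
def graphOnHalfLine (L : (ℝ → ℂ) → (ℝ → ℂ)) : Submodule ℂ (Lp ℂ 2 lebIoi × Lp ℂ 2 lebIoi) :=
  Submodule.span ℂ {p | ∃ φ : ℝ → ℂ, ContDiff ℝ (⊤ : ℕ∞) φ ∧ HasCompactSupport φ ∧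
    tsupport φ ⊆ Set.Ioi 0 ∧
    (p.1 : ℝ → ℂ) =ᵐ[lebIoi] φ ∧ (p.2 : ℝ → ℂ) =ᵐ[lebIoi] L φ}

/-- The operator in `L²((0,∞); dr)` given by a formal differential expression `L`
with domain `C₀^∞((0,∞))`. -/
def opOnHalfLine (L : (ℝ → ℂ) → (ℝ → ℂ)) : Lp ℂ 2 lebIoi →ₗ.[ℂ] Lp ℂ 2 lebIoi :=
  (graphOnHalfLine L).toLinearPMap


/-- The differential expression `d²/dr² - (n+2ℓ-1)(n+2ℓ-3)/(4r²)`. -/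
def bExp (n ℓ : ℕ) (φ : ℝ → ℂ) : ℝ → ℂ := fun r =>
  deriv (deriv φ) r
    - (((((n : ℝ) + 2 * ℓ - 1) * ((n : ℝ) + 2 * ℓ - 3)) / (4 * r ^ 2) : ℝ) : ℂ) * φ r

/-- The differential expression `τ_{2,n,ℓ}(c) = [d²/dr² - (n+2ℓ-1)(n+2ℓ-3)/(4r²)]² + c/r⁴`. -/
def tau2nlExp (n ℓ : ℕ) (c : ℝ) (φ : ℝ → ℂ) : ℝ → ℂ := fun r =>
  bExp n ℓ (bExp n ℓ φ) r + ((c / r ^ 4 : ℝ) : ℂ) * φ r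

/-- The operator `τ_{2,n,ℓ}(c)|_{C₀^∞((0,∞))}` in `L²((0,∞); dr)`. -/
def tau2nlOp (n ℓ : ℕ) (c : ℝ) : Lp ℂ 2 lebIoi →ₗ.[ℂ] Lp ℂ 2 lebIoi :=
  opOnHalfLine (tau2nlExp n ℓ c)

/-- The constant `γ_{2,n,ℓ}`. -/
def gamma2 (n ℓ : ℕ) : ℝ :=
  if ((n : ℝ) + 2 * ℓ - 1) * ((n : ℝ) + 2 * ℓ - 3) ≤ 11 then
    -3 * ((n : ℝ) + 2 * ℓ + 2) * ((n : ℝ) + 2 * ℓ - 6)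
  else
    -(((n : ℝ) + 2 * ℓ + 4) * ((n : ℝ) + 2 * ℓ) * ((n : ℝ) + 2 * ℓ - 4) *
      ((n : ℝ) + 2 * ℓ - 8)) / 16

namespace EulerODE

open Set Filter Topology Asymptotics
open scoped ENNReal

/-- A sequence of functions each of which is the derivative of the preceding one. -/
def IsJet (u : ℕ → ℝ → ℂ) : Prop := ∀ k t, HasDerivAt (u k) (u (k + 1) t) t

/-- The differential expression `∂⁴ - a ∂² + K` evaluated on a jet. -/
def jetOp (a K : ℝ) (u : ℕ → ℝ → ℂ) : ℝ → ℂ := fun t => u 4 t - a * u 2 t + K * u 0 t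

/-- The Lagrange bracket of `∂⁴ - a ∂² + K`. -/
def bracket (a : ℝ) (u v : ℕ → ℝ → ℂ) : ℝ → ℂ := fun t =>
  u 3 t * v 0 t - u 2 t * v 1 t + u 1 t * v 2 t - u 0 t * v 3 t
    - a * (u 1 t * v 0 t - u 0 t * v 1 t)

lemma hasDerivAt_bracket (a K : ℝ) {u v : ℕ → ℝ → ℂ} (hu : IsJet u) (hv : IsJet v) (t : ℝ) :
    HasDerivAt (bracket a u v) (jetOp a K u t * v 0 t - u 0 t * jetOp a K v t) t := by
  have h := (((((hu 3 t).mul (hv 0 t)).sub ((hu 2 t).mul (hv 1 t))).add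
    ((hu 1 t).mul (hv 2 t))).sub ((hu 0 t).mul (hv 3 t))).sub
    ((((hu 1 t).mul (hv 0 t)).sub ((hu 0 t).mul (hv 1 t))).const_mul (a : ℂ))
  refine h.congr_deriv ?_
  simp only [jetOp]
  ring

lemma IsJet.continuous {u : ℕ → ℝ → ℂ} (hu : IsJet u) (k : ℕ) : Continuous (u k) :=
  continuous_iff_continuousAt.2 fun t => (hu k t).continuousAt

lemma IsJet.continuous_jetOp {u : ℕ → ℝ → ℂ} (hu : IsJet u) (a K : ℝ) :
    Continuous (jetOp a K u) := by
  have := hu.continuous 4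
  have := hu.continuous 2
  have := hu.continuous 0
  unfold jetOp
  fun_prop

lemma IsJet.eq_iteratedDeriv {u : ℕ → ℝ → ℂ} (hu : IsJet u) (k : ℕ) :
    iteratedDeriv k (u 0) = u k := by
  induction k with
  | zero => simp
  | succ k ih => rw [iteratedDeriv_succ, ih]; exact funext fun t => (hu k t).deriv

lemma isJet_iteratedDeriv {f : ℝ → ℂ} (hf : ContDiff ℝ (⊤ : ℕ∞) f) :
    IsJet (fun k => iteratedDeriv k f) := fun k t => by
  have h : DifferentiableAt ℝ (iteratedDeriv k f) t :=
    (hf.differentiable_iteratedDeriv k (by exact_mod_cast WithTop.coe_lt_top _)) t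
  have := h.hasDerivAt
  rwa [← iteratedDeriv_succ] at this

/-- Increments of a function are dominated by those of any `B` whose derivative
majorizes its derivative. -/
lemma norm_sub_le_of_deriv_le {F F' : ℝ → ℂ} {B B' : ℝ → ℝ} {s t : ℝ} (hst : s ≤ t)
    (hF : ∀ x, HasDerivAt F (F' x) x) (hB : ∀ x, HasDerivAt B (B' x) x)
    (bound : ∀ x ∈ Icc s t, ‖F' x‖ ≤ B' x) : ‖F t - F s‖ ≤ B t - B s := by
  have := image_norm_le_of_norm_deriv_right_le_deriv_boundary (f := fun x => F x - F s)
    (f' := F') (a := s) (b := t) (B := fun x => B x - B s) (B' := B')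
    (fun x _ => ((hF x).sub_const _).continuousAt.continuousWithinAt)
    (fun x _ => ((hF x).sub_const _).hasDerivWithinAt)
    (by simp) (fun x => (hB x).sub_const _) (fun x hx => bound x ⟨hx.1, hx.2.le⟩)
  exact this ⟨hst, le_rfl⟩

lemma hasDerivAt_cexp_mul (q : ℂ) (t : ℝ) :
    HasDerivAt (fun t : ℝ => Complex.exp (q * t)) (q * Complex.exp (q * t)) t := by
  have h : HasDerivAt (fun t : ℝ => q * (t : ℂ)) q t := by
    simpa using (Complex.ofRealCLM.hasDerivAt (x := t)).const_mul q
  simpa [mul_comm] using h.cexp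

lemma norm_cexp_mul (q : ℂ) (t : ℝ) : ‖Complex.exp (q * t)‖ = Real.exp (q.re * t) := by
  simp [Complex.norm_exp]

lemma hasDerivAt_expBound (C r x : ℝ) (hr : r ≠ 0) :
    HasDerivAt (fun x => C / r * Real.exp (r * x)) (C * Real.exp (r * x)) x := by
  have h : HasDerivAt (fun x => r * x) r x := by simpa using (hasDerivAt_id x).const_mul r
  refine (h.exp.const_mul (C / r)).congr_deriv ?_
  field_simp

/-- A solution of `g' + q g = w` that decays faster than `exp (-q t)` at `-∞` inherits the decay
of `w`. -/
lemma isBigO_of_deriv_add {q : ℂ} (hq : 2 ≤ q.re) {g w : ℝ → ℂ}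
    (hg : ∀ t, HasDerivAt g (w t - q * g t) t)
    (hdecay : Tendsto (fun t => Real.exp (2 * t) * ‖g t‖) atBot (𝓝 0))
    (hw : w =O[atBot] fun t => Real.exp t) : g =O[atBot] fun t => Real.exp t := by
  obtain ⟨C, hC⟩ := hw.bound
  obtain ⟨T, hT⟩ := eventually_atBot.1 hC
  have hF : ∀ x : ℝ, HasDerivAt (fun t : ℝ => Complex.exp (q * t) * g t)
      (Complex.exp (q * x) * w x) x := fun x =>
    ((hasDerivAt_cexp_mul q x).mul (hg x)).congr_deriv (by ring)
  have hr : q.re + 1 ≠ 0 := by linarith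
  refine IsBigO.of_bound (C / (q.re + 1)) (eventually_atBot.2 ⟨T, fun t ht => ?_⟩)
  have key : ∀ s ≤ t, ‖Complex.exp (q * t) * g t‖ ≤
      C / (q.re + 1) * Real.exp ((q.re + 1) * t) - C / (q.re + 1) * Real.exp ((q.re + 1) * s)
        + ‖Complex.exp (q * s) * g s‖ := by
    intro s hs
    have h1 := norm_sub_le_of_deriv_le hs hF (fun x => hasDerivAt_expBound C (q.re + 1) x hr)
      (fun x hx => by
        rw [norm_mul, norm_cexp_mul]
        have := hT x (hx.2.trans ht)
        rw [Real.norm_of_nonneg (Real.exp_pos _).le] at this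
        calc _ ≤ Real.exp (q.re * x) * (C * Real.exp x) := by gcongr
          _ = _ := by rw [add_mul, Real.exp_add, one_mul]; ring)
    have h2 := norm_sub_norm_le (Complex.exp (q * t) * g t) (Complex.exp (q * s) * g s)
    linarith
  have lim1 : Tendsto (fun s : ℝ => ‖Complex.exp (q * s) * g s‖) atBot (𝓝 0) := by
    refine squeeze_zero' (Eventually.of_forall fun _ => norm_nonneg _)
      (eventually_atBot.2 ⟨0, fun s hs => ?_⟩) hdecay
    rw [norm_mul, norm_cexp_mul]
    have : q.re * s ≤ 2 * s := by nlinarith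
    gcongr
  have lim2 : Tendsto (fun s : ℝ => Real.exp ((q.re + 1) * s)) atBot (𝓝 0) :=
    Real.tendsto_exp_atBot.comp (tendsto_id.const_mul_atBot (by linarith))
  have lim := (tendsto_const_nhds (x := C / (q.re + 1) * Real.exp ((q.re + 1) * t)) |>.sub
    (lim2.const_mul (C / (q.re + 1)))).add lim1
  have h := ge_of_tendsto lim (eventually_atBot.2 ⟨t, key⟩)
  rw [mul_zero, sub_zero, add_zero, norm_mul, norm_cexp_mul, add_mul, Real.exp_add, one_mul] at h
  rw [Real.norm_of_nonneg (Real.exp_pos _).le]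
  have hpos := Real.exp_pos (q.re * t)
  refine le_of_mul_le_mul_left (h.trans_eq ?_) hpos
  ring

/-- Solutions of `u' - q u = g` with `2 ≤ re q` inherit the bound `exp t` at `-∞` from `g`. -/
lemma isBigO_of_deriv_sub {q : ℂ} (hq : 2 ≤ q.re) {u g : ℝ → ℂ}
    (hu : ∀ t, HasDerivAt u (g t + q * u t) t)
    (hg : g =O[atBot] fun t => Real.exp t) : u =O[atBot] fun t => Real.exp t := by
  obtain ⟨C, hC0, hC⟩ := hg.exists_pos
  obtain ⟨T, hT⟩ := eventually_atBot.1 hC.bound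
  have hF : ∀ x : ℝ, HasDerivAt (fun t : ℝ => Complex.exp (-q * t) * u t)
      (Complex.exp (-q * x) * g x) x := fun x =>
    ((hasDerivAt_cexp_mul (-q) x).mul (hu x)).congr_deriv (by ring)
  have hr : 1 - q.re ≠ 0 := by linarith
  set S := min T 0
  refine IsBigO.of_bound (‖Complex.exp (-q * S) * u S‖ + C / (q.re - 1))
    (eventually_atBot.2 ⟨S, fun t ht => ?_⟩)
  have h1 := norm_sub_le_of_deriv_le ht hF (fun x => hasDerivAt_expBound C (1 - q.re) x hr)
      (fun x hx => by
        rw [norm_mul, norm_cexp_mul]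
        have := hT x (hx.2.trans (min_le_left _ _))
        rw [Real.norm_of_nonneg (Real.exp_pos _).le] at this
        calc _ ≤ Real.exp ((-q).re * x) * (C * Real.exp x) := by gcongr
          _ = _ := by rw [sub_mul, sub_eq_add_neg, Real.exp_add, one_mul]; simp; ring)
  have h2 := norm_sub_norm_le (Complex.exp (-q * t) * u t) (Complex.exp (-q * S) * u S)
  rw [norm_sub_rev] at h2
  have h3 : C / (1 - q.re) * Real.exp ((1 - q.re) * S) ≤ 0 :=
    mul_nonpos_of_nonpos_of_nonneg (div_nonpos_of_nonneg_of_nonpos hC0.le (by linarith))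
      (Real.exp_pos _).le
  have h4 : -(C / (1 - q.re)) = C / (q.re - 1) := by rw [← div_neg, neg_sub]
  have h5 : ‖Complex.exp (-q * t) * u t‖ ≤ ‖Complex.exp (-q * S) * u S‖
      + C / (q.re - 1) * Real.exp ((1 - q.re) * t) := by rw [← h4]; linarith
  have ht0 : t ≤ 0 := ht.trans (min_le_right _ _)
  rw [norm_mul, norm_cexp_mul, Complex.neg_re] at h5
  rw [Real.norm_of_nonneg (Real.exp_pos _).le]
  have e1 : Real.exp (q.re * t) * Real.exp (-q.re * t) = 1 := by rw [← Real.exp_add]; simp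
  have e2 : Real.exp (q.re * t) * Real.exp ((1 - q.re) * t) = Real.exp t := by
    rw [← Real.exp_add]; congr 1; ring
  have e3 : Real.exp (q.re * t) ≤ Real.exp t := Real.exp_le_exp.2 (by nlinarith)
  have h6 := mul_le_mul_of_nonneg_left h5 (Real.exp_pos (q.re * t)).le
  rw [← mul_assoc, e1, one_mul, mul_add, mul_left_comm, e2] at h6
  have h7 := mul_le_mul_of_nonneg_left e3 (norm_nonneg (Complex.exp (-q * S) * u S))
  linarith

/-- Jets that are `o(exp (-2t))` at `-∞` and solve `(∂⁴ - a ∂² + K) u = O(exp t)` are `O(exp t)`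
if the roots of the characteristic polynomial avoid the strip `|re z| < 2`. -/
lemma isBigO_jet {a K : ℝ} {q₁ q₂ : ℂ} (h₁ : 2 ≤ q₁.re) (h₂ : 2 ≤ q₂.re)
    (ha : (a : ℂ) = q₁ ^ 2 + q₂ ^ 2) (hK : (K : ℂ) = q₁ ^ 2 * q₂ ^ 2) {u : ℕ → ℝ → ℂ}
    (hu : IsJet u)
    (hdecay : ∀ k, Tendsto (fun t => Real.exp (2 * t) * ‖u k t‖) atBot (𝓝 0))
    (hw : jetOp a K u =O[atBot] fun t => Real.exp t) {k : ℕ} (hk : k < 4) :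
    u k =O[atBot] fun t => Real.exp t := by
  have hcomb : ∀ {f g : ℝ → ℂ} (q : ℂ),
      Tendsto (fun t => Real.exp (2 * t) * ‖f t‖) atBot (𝓝 0) →
      Tendsto (fun t => Real.exp (2 * t) * ‖g t‖) atBot (𝓝 0) →
      Tendsto (fun t => Real.exp (2 * t) * ‖f t + q * g t‖) atBot (𝓝 0) := by
    intro f g q hf hg
    refine squeeze_zero (fun t => by positivity) (fun t => ?_)
      (by simpa using hf.add (hg.const_mul ‖q‖))
    have := norm_add_le (f t) (q * g t)
    rw [norm_mul] at this
    have h := mul_le_mul_of_nonneg_left this (Real.exp_pos (2 * t)).le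
    linarith
  set h : ℕ → ℝ → ℂ := fun k t => u (k + 1) t + (-q₂) * u k t with hh
  set g : ℕ → ℝ → ℂ := fun k t => h (k + 1) t + (-q₁) * h k t with hgdef
  set G : ℕ → ℝ → ℂ := fun k t => g (k + 1) t + q₂ * g k t with hG
  have jh : IsJet h := fun k t => (hu (k + 1) t).add ((hu k t).const_mul _)
  have jg : IsJet g := fun k t => (jh (k + 1) t).add ((jh k t).const_mul _)
  have jG : IsJet G := fun k t => (jg (k + 1) t).add ((jg k t).const_mul _)
  have dh : ∀ k, Tendsto (fun t => Real.exp (2 * t) * ‖h k t‖) atBot (𝓝 0) := fun k =>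
    hcomb _ (hdecay _) (hdecay _)
  have dg : ∀ k, Tendsto (fun t => Real.exp (2 * t) * ‖g k t‖) atBot (𝓝 0) := fun k =>
    hcomb _ (dh _) (dh _)
  have dG : ∀ k, Tendsto (fun t => Real.exp (2 * t) * ‖G k t‖) atBot (𝓝 0) := fun k =>
    hcomb _ (dg _) (dg _)
  have oG : G 0 =O[atBot] fun t => Real.exp t := by
    refine isBigO_of_deriv_add h₁ (fun t => (jG 0 t).congr_deriv ?_) (dG 0) hw
    simp only [hG, hgdef, hh, jetOp, ha, hK]
    ring
  have og : g 0 =O[atBot] fun t => Real.exp t := by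
    refine isBigO_of_deriv_add h₂ (fun t => (jg 0 t).congr_deriv ?_) (dg 0) oG
    simp only [hG]; ring
  have oh : h 0 =O[atBot] fun t => Real.exp t := by
    refine isBigO_of_deriv_sub h₁ (fun t => (jh 0 t).congr_deriv ?_) og
    simp only [hgdef]; ring
  have o0 : u 0 =O[atBot] fun t => Real.exp t := by
    refine isBigO_of_deriv_sub h₂ (fun t => (hu 0 t).congr_deriv ?_) oh
    simp only [hh]; ring
  have o1 : u 1 =O[atBot] fun t => Real.exp t :=
    (oh.add (o0.const_mul_left q₂)).congr_left fun t => by simp only [hh]; ring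
  have oh1 : h 1 =O[atBot] fun t => Real.exp t :=
    (og.add (oh.const_mul_left q₁)).congr_left fun t => by simp only [hgdef]; ring
  have o2 : u 2 =O[atBot] fun t => Real.exp t :=
    (oh1.add (o1.const_mul_left q₂)).congr_left fun t => by simp only [hh]; ring
  have og1 : g 1 =O[atBot] fun t => Real.exp t :=
    (oG.sub (og.const_mul_left q₂)).congr_left fun t => by simp only [hG]; ring
  have oh2 : h 2 =O[atBot] fun t => Real.exp t :=
    (og1.add (oh1.const_mul_left q₁)).congr_left fun t => by simp only [hgdef]; ring
  have o3 : u 3 =O[atBot] fun t => Real.exp t :=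
    (oh2.add (o2.const_mul_left q₂)).congr_left fun t => by simp only [hh]; ring
  interval_cases k <;> assumption

lemma tendsto_bracket {a : ℝ} {u v : ℕ → ℝ → ℂ} {l : Filter ℝ}
    (h : ∀ j < 4, ∀ k < 4, Tendsto (fun t => u j t * v k t) l (𝓝 0)) :
    Tendsto (bracket a u v) l (𝓝 0) := by
  have h' := ((((h 3 (by norm_num) 0 (by norm_num)).sub (h 2 (by norm_num) 1 (by norm_num))).add
    (h 1 (by norm_num) 2 (by norm_num))).sub (h 0 (by norm_num) 3 (by norm_num))).sub
    (((h 1 (by norm_num) 0 (by norm_num)).sub (h 0 (by norm_num) 1 (by norm_num))).const_mul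
      (a : ℂ))
  unfold bracket
  simpa using h'

/-- Lagrange's identity on the whole line for jets without boundary contributions. -/
lemma integral_jetOp_eq {a K : ℝ} {q₁ q₂ : ℂ} (h₁ : 2 ≤ q₁.re) (h₂ : 2 ≤ q₂.re)
    (ha : (a : ℂ) = q₁ ^ 2 + q₂ ^ 2) (hK : (K : ℂ) = q₁ ^ 2 * q₂ ^ 2) {u v : ℕ → ℝ → ℂ}
    (hu : IsJet u) (hv : IsJet v)
    (hdu : ∀ k, Tendsto (fun t => Real.exp (2 * t) * ‖u k t‖) (cocompact ℝ) (𝓝 0))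
    (hdv : ∀ k, Tendsto (fun t => Real.exp (2 * t) * ‖v k t‖) (cocompact ℝ) (𝓝 0))
    (hwu : jetOp a K u =O[atBot] fun t => Real.exp t)
    (hwv : jetOp a K v =O[atBot] fun t => Real.exp t)
    (i₁ : Integrable fun t => jetOp a K u t * v 0 t)
    (i₂ : Integrable fun t => u 0 t * jetOp a K v t) :
    ∫ t, jetOp a K u t * v 0 t = ∫ t, u 0 t * jetOp a K v t := by
  rw [← sub_eq_zero, ← integral_sub i₁ i₂, ← sub_zero (0 : ℂ)]
  rw [cocompact_eq_atBot_atTop] at hdu hdv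
  refine integral_of_hasDerivAt_of_tendsto (hasDerivAt_bracket a K hu hv) (i₁.sub i₂)
    (tendsto_bracket fun j hj k hk => ?_) (tendsto_bracket fun j hj k hk => ?_)
  · have ou := isBigO_jet h₁ h₂ ha hK hu (fun k => (hdu k).mono_left le_sup_left) hwu hj
    have ov := isBigO_jet h₁ h₂ ha hK hv (fun k => (hdv k).mono_left le_sup_left) hwv hk
    refine (ou.mul ov).trans_tendsto ?_
    simpa using Real.tendsto_exp_atBot.mul Real.tendsto_exp_atBot
  · have h := ((hdu j).mono_left (le_sup_right (a := atBot))).mul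
      ((hdv k).mono_left (le_sup_right (a := atBot)))
    rw [tendsto_zero_iff_norm_tendsto_zero]
    refine squeeze_zero' (Eventually.of_forall fun _ => norm_nonneg _)
      (eventually_atTop.2 ⟨0, fun t ht => ?_⟩) (by simpa using h)
    rw [norm_mul]
    have e : 1 ≤ Real.exp (2 * t) := Real.one_le_exp (by linarith)
    gcongr
    · exact le_mul_of_one_le_left (norm_nonneg _) e
    · exact le_mul_of_one_le_left (norm_nonneg _) e

lemma tendsto_eLpNorm_translate {V : ℝ → ℂ} (hV : MemLp V 2) :
    Tendsto (fun s => eLpNorm (fun t => V (t - s) - V t) 2) (𝓝 0) (𝓝 0) := by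
  let g : C(ℝ, C(ℝ, ℝ)) := ContinuousMap.curry ⟨fun p : ℝ × ℝ => p.2 - p.1, by fun_prop⟩
  have hgm : ∀ s, MeasurePreserving (g s) volume volume := fun s =>
    measurePreserving_sub_right volume s
  have h := Filter.Tendsto.compMeasurePreservingLp (tendsto_const_nhds (x := hV.toLp V) (f := 𝓝 0))
    (g.continuous.tendsto 0) hgm (hgm 0) (by norm_num)
  simp only [Lp.toLp_compMeasurePreserving] at h
  rw [Lp.tendsto_Lp_iff_tendsto_eLpNorm''] at h
  refine h.congr fun s => ?_
  congr 1
  funext t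
  simp [g]

/-- Mollification of `V` by the kernel `κ`. -/
def mol (κ : ℝ → ℝ) (V : ℝ → ℂ) (t : ℝ) : ℂ := ∫ s, κ (t - s) • V s

lemma integrable_mol {κ : ℝ → ℝ} (hκ : Continuous κ) (hc : HasCompactSupport κ) {V : ℝ → ℂ}
    (hV : LocallyIntegrable V) (t : ℝ) : Integrable fun s => κ (t - s) • V s :=
  hc.convolutionExists_right (ContinuousLinearMap.lsmul ℝ ℝ).flip hV hκ t

lemma continuous_mol {κ : ℝ → ℝ} (hκ : Continuous κ) (hc : HasCompactSupport κ) {V : ℝ → ℂ}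
    (hV : LocallyIntegrable V) : Continuous (mol κ V) :=
  hc.continuous_convolution_right (ContinuousLinearMap.lsmul ℝ ℝ).flip hV hκ

lemma mol_sub_eq {κ : ℝ → ℝ} (hκ : Continuous κ) (hc : HasCompactSupport κ) (h1 : ∫ s, κ s = 1)
    {V : ℝ → ℂ} (hV : LocallyIntegrable V) (t : ℝ) :
    mol κ V t - V t = ∫ s, κ s • (V (t - s) - V t) := by
  have i1 := (integrable_mol hκ hc hV t).comp_sub_left t
  simp only [sub_sub_cancel] at i1
  have i2 : Integrable fun s => κ s • V t := (hκ.integrable_of_hasCompactSupport hc).smul_const _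
  simp_rw [smul_sub]
  rw [integral_sub i1 i2, integral_smul_const, h1, one_smul, mol,
    ← integral_sub_left_eq_self (fun s => κ (t - s) • V s) volume t]
  simp

lemma sq_lintegral_le {κ : ℝ → ℝ} (hκ : Continuous κ) (h0 : ∀ s, 0 ≤ κ s)
    (hint : Integrable κ) (h1 : ∫ s, κ s = 1) {F : ℝ → ℝ≥0∞} (hF : Measurable F) :
    (∫⁻ s, ENNReal.ofReal (κ s) * F s) ^ (2 : ℝ) ≤ ∫⁻ s, ENNReal.ofReal (κ s) * F s ^ (2 : ℝ) := by
  have mκ : Measurable fun s => ENNReal.ofReal (κ s) := hκ.measurable.ennreal_ofReal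
  set μ := volume.withDensity fun s => ENNReal.ofReal (κ s)
  have hμ : μ univ = 1 := by
    rw [withDensity_apply _ MeasurableSet.univ, Measure.restrict_univ,
      ← ofReal_integral_eq_lintegral_ofReal hint (Eventually.of_forall h0), h1, ENNReal.ofReal_one]
  have e : ∀ {G : ℝ → ℝ≥0∞}, Measurable G →
      ∫⁻ s, ENNReal.ofReal (κ s) * G s = ∫⁻ s, G s ∂μ := fun hG =>
    (lintegral_withDensity_eq_lintegral_mul volume mκ hG).symm
  rw [e hF, e (hF.pow_const _)]
  have h := ENNReal.lintegral_mul_le_Lp_mul_Lq μ Real.HolderConjugate.two_two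
    (aemeasurable_const (b := (1 : ℝ≥0∞))) hF.aemeasurable
  simp only [Pi.mul_apply, one_mul, ENNReal.one_rpow, lintegral_const, hμ, mul_one] at h
  calc _ ≤ ((∫⁻ s, F s ^ (2 : ℝ) ∂μ) ^ (1 / 2 : ℝ)) ^ (2 : ℝ) := by gcongr
    _ = _ := by rw [← ENNReal.rpow_mul]; simp

lemma eLpNorm_mol_sub_le {κ : ℝ → ℝ} (hκ : Continuous κ) (hc : HasCompactSupport κ)
    (h0 : ∀ s, 0 ≤ κ s) (h1 : ∫ s, κ s = 1) {V : ℝ → ℂ} (hV : LocallyIntegrable V)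
    (hm : StronglyMeasurable V) {C : ℝ≥0∞}
    (hC : ∀ s, κ s ≠ 0 → eLpNorm (fun t => V (t - s) - V t) 2 ≤ C) :
    eLpNorm (fun t => mol κ V t - V t) 2 ≤ C := by
  have hint := hκ.integrable_of_hasCompactSupport hc (μ := volume)
  have mV : Measurable V := hm.measurable
  have mκ : Measurable fun s => ENNReal.ofReal (κ s) := hκ.measurable.ennreal_ofReal
  have key : ∫⁻ t, ‖mol κ V t - V t‖ₑ ^ (2 : ℝ) ≤ C ^ (2 : ℝ) := by
    calc ∫⁻ t, ‖mol κ V t - V t‖ₑ ^ (2 : ℝ)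
        ≤ ∫⁻ t, ∫⁻ s, ENNReal.ofReal (κ s) * ‖V (t - s) - V t‖ₑ ^ (2 : ℝ) := by
          refine lintegral_mono fun t => ?_
          refine le_trans ?_ (sq_lintegral_le hκ h0 hint h1 (by fun_prop))
          refine ENNReal.rpow_le_rpow ?_ (by norm_num)
          rw [mol_sub_eq hκ hc h1 hV]
          refine (enorm_integral_le_lintegral_enorm _).trans_eq (lintegral_congr fun s => ?_)
          rw [enorm_smul, Real.enorm_of_nonneg (h0 s)]
      _ = ∫⁻ s, ENNReal.ofReal (κ s) * ∫⁻ t, ‖V (t - s) - V t‖ₑ ^ (2 : ℝ) := by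
          rw [lintegral_lintegral_swap]
          · refine lintegral_congr fun s => ?_
            rw [lintegral_const_mul]
            fun_prop
          · exact Measurable.aemeasurable (by fun_prop)
      _ ≤ ∫⁻ s, ENNReal.ofReal (κ s) * C ^ (2 : ℝ) := by
          refine lintegral_mono fun s => ?_
          by_cases hs : κ s = 0
          · simp [hs]
          have h := hC s hs
          rw [eLpNorm_eq_lintegral_rpow_enorm_toReal (by norm_num) (by norm_num)] at h
          gcongr
          have h' := ENNReal.rpow_le_rpow h (z := 2) (by norm_num)
          rw [← ENNReal.rpow_mul] at h'
          simpa using h'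
      _ = C ^ (2 : ℝ) := by
          rw [lintegral_mul_const _ mκ, ← ofReal_integral_eq_lintegral_ofReal hint
            (Eventually.of_forall h0), h1, ENNReal.ofReal_one, one_mul]
  rw [eLpNorm_eq_lintegral_rpow_enorm_toReal (by norm_num) (by norm_num)]
  have h' := ENNReal.rpow_le_rpow key (z := 1 / 2) (by norm_num)
  rw [← ENNReal.rpow_mul] at h'
  simpa using h'

lemma memLp_locallyIntegrable {V : ℝ → ℂ} (hV : MemLp V 2) : LocallyIntegrable V :=
  hV.locallyIntegrable (by norm_num)

lemma memLp_mol {κ : ℝ → ℝ} (hκ : Continuous κ) (hc : HasCompactSupport κ)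
    (h0 : ∀ s, 0 ≤ κ s) (h1 : ∫ s, κ s = 1) {V : ℝ → ℂ} (hV : MemLp V 2)
    (hm : StronglyMeasurable V) : MemLp (mol κ V) 2 := by
  have hl := memLp_locallyIntegrable hV
  have hlt : eLpNorm (fun t => mol κ V t - V t) 2 ≤ eLpNorm V 2 + eLpNorm V 2 := by
    refine eLpNorm_mol_sub_le hκ hc h0 h1 hl hm fun s _ => ?_
    have mp := measurePreserving_sub_right (volume : Measure ℝ) s
    refine (eLpNorm_sub_le (f := fun t => V (t - s)) (g := V)
      (hV.comp_measurePreserving mp).1 hV.1 (by norm_num)).trans_eq ?_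
    congr 1
    exact eLpNorm_comp_measurePreserving hV.1 mp
  have hd : MemLp (fun t => mol κ V t - V t) 2 :=
    ⟨(continuous_mol hκ hc hl).aestronglyMeasurable.sub hV.1,
      hlt.trans_lt (ENNReal.add_lt_top.2 ⟨hV.2, hV.2⟩)⟩
  refine (hd.add hV).ae_eq (Eventually.of_forall fun t => ?_)
  simp

lemma tendsto_eLpNorm_mol_sub {κ : ℕ → ℝ → ℝ} (hκ : ∀ n, Continuous (κ n))
    (hc : ∀ n, HasCompactSupport (κ n)) (h0 : ∀ n s, 0 ≤ κ n s) (h1 : ∀ n, ∫ s, κ n s = 1)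
    (hs : ∀ n s, κ n s ≠ 0 → |s| < 1 / ((n : ℝ) + 1)) {V : ℝ → ℂ} (hV : MemLp V 2)
    (hm : StronglyMeasurable V) :
    Tendsto (fun n => eLpNorm (fun t => mol (κ n) V t - V t) 2) atTop (𝓝 0) := by
  rw [ENNReal.tendsto_nhds_zero]
  intro ε hε
  have h := ENNReal.tendsto_nhds_zero.1 (tendsto_eLpNorm_translate hV) ε hε
  obtain ⟨δ, hδ, hball⟩ := Metric.eventually_nhds_iff.1 h
  filter_upwards [(tendsto_one_div_add_atTop_nhds_zero_nat (𝕜 := ℝ)).eventually (gt_mem_nhds hδ)]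
    with n hn
  refine eLpNorm_mol_sub_le (hκ n) (hc n) (h0 n) (h1 n) (memLp_locallyIntegrable hV) hm
    fun s hne => hball ?_
  rw [Real.dist_0_eq_abs]
  exact (hs n s hne).trans hn

/-- Mollifications of square integrable functions vanish at infinity. -/
lemma tendsto_mol_cocompact {κ : ℝ → ℝ} (hκ : Continuous κ) (hc : HasCompactSupport κ)
    {V : ℝ → ℂ} (hV : MemLp V 2) : Tendsto (fun t => ‖mol κ V t‖) (cocompact ℝ) (𝓝 0) := by
  have hint := (hκ.integrable_of_hasCompactSupport hc (μ := volume)).norm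
  have hsq : Integrable fun s => ‖V s‖ ^ 2 := (memLp_two_iff_integrable_sq_norm hV.1).1 hV
  obtain ⟨M, hM⟩ := hc.exists_bound_of_continuous hκ
  have mκ : ∀ t, AEStronglyMeasurable (fun s => ‖κ (t - s)‖ * ‖V s‖ ^ 2) := fun t =>
    (show Continuous fun s => ‖κ (t - s)‖ by fun_prop).aestronglyMeasurable.mul
      hsq.aestronglyMeasurable
  have hbd : ∀ t s, ‖‖κ (t - s)‖ * ‖V s‖ ^ 2‖ ≤ M * ‖V s‖ ^ 2 := fun t s => by
    rw [norm_mul, norm_norm, norm_pow, norm_norm]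
    gcongr
    exact hM _
  have hJ : Tendsto (fun t => ∫ s, ‖κ (t - s)‖ * ‖V s‖ ^ 2) (cocompact ℝ) (𝓝 0) := by
    have : (cocompact ℝ).IsCountablyGenerated := by
      rw [cocompact_eq_atBot_atTop]; infer_instance
    rw [← integral_zero ℝ ℝ (μ := volume)]
    refine tendsto_integral_filter_of_dominated_convergence (fun s => M * ‖V s‖ ^ 2)
      (Eventually.of_forall mκ) (Eventually.of_forall fun t => Eventually.of_forall (hbd t))
      (hsq.const_mul M) (Eventually.of_forall fun s => ?_)
    refine tendsto_const_nhds.congr' ?_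
    have h : Tendsto (fun t => t - s) (cocompact ℝ) (cocompact ℝ) :=
      (Homeomorph.subRight s).isClosedEmbedding.tendsto_cocompact
    filter_upwards [h.eventually hc.compl_mem_cocompact] with t ht
    have : κ (t - s) = 0 := image_eq_zero_of_notMem_tsupport ht
    simp [this]
  have hle : ∀ δ > 0, ∀ t, ‖mol κ V t‖ ≤
      δ * (∫ s, ‖κ s‖) + δ⁻¹ * ∫ s, ‖κ (t - s)‖ * ‖V s‖ ^ 2 := by
    intro δ hδ t
    have i1 : Integrable fun s => ‖κ (t - s)‖ := hint.comp_sub_left t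
    have i2 : Integrable fun s => ‖κ (t - s)‖ * ‖V s‖ ^ 2 :=
      (hsq.const_mul M).mono' (mκ t) (Eventually.of_forall (hbd t))
    rw [← integral_sub_left_eq_self (fun s => ‖κ s‖) volume t, ← integral_const_mul,
      ← integral_const_mul, ← integral_add (i1.const_mul δ) (i2.const_mul δ⁻¹)]
    refine norm_integral_le_of_norm_le ((i1.const_mul δ).add (i2.const_mul δ⁻¹))
      (Eventually.of_forall fun s => ?_)
    have hx : ‖V s‖ ≤ δ + δ⁻¹ * ‖V s‖ ^ 2 := by
      have : 0 ≤ δ⁻¹ * ((‖V s‖ - δ) ^ 2 + δ * ‖V s‖) := by positivity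
      have e : δ⁻¹ * ((‖V s‖ - δ) ^ 2 + δ * ‖V s‖) = δ + δ⁻¹ * ‖V s‖ ^ 2 - ‖V s‖ := by
        field_simp
        ring
      linarith
    rw [norm_smul]
    calc _ ≤ ‖κ (t - s)‖ * (δ + δ⁻¹ * ‖V s‖ ^ 2) := by gcongr
      _ = _ := by ring
  rw [Metric.tendsto_nhds]
  intro ε hε
  set I := ∫ s, ‖κ s‖ with hI
  have hI0 : 0 ≤ I := integral_nonneg fun _ => norm_nonneg _
  set δ := ε / (2 * (I + 1)) with hδdef
  have hδ : 0 < δ := by positivity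
  have hδI : δ * I < ε / 2 := by
    rw [hδdef, div_mul_eq_mul_div, div_lt_div_iff₀ (by positivity) (by norm_num)]
    nlinarith
  have hev := (hJ.const_mul δ⁻¹).eventually (gt_mem_nhds (show δ⁻¹ * 0 < ε / 2 by simpa using hε))
  filter_upwards [hev] with t ht
  rw [Real.dist_0_eq_abs, abs_norm]
  linarith [hle δ hδ t]

/-- Convergence of integrals of products of `L²`-convergent sequences. -/
lemma tendsto_integral_mul {A B : ℝ → ℂ} {A' B' : ℕ → ℝ → ℂ} (hA : MemLp A 2) (hB : MemLp B 2)
    (hA' : ∀ n, MemLp (A' n) 2) (hB' : ∀ n, MemLp (B' n) 2)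
    (tA : Tendsto (fun n => eLpNorm (fun t => A' n t - A t) 2) atTop (𝓝 0))
    (tB : Tendsto (fun n => eLpNorm (fun t => B' n t - B t) 2) atTop (𝓝 0)) :
    Tendsto (fun n => ∫ t, A' n t * B' n t) atTop (𝓝 (∫ t, A t * B t)) := by
  have e : ∀ {F G : ℝ → ℂ} (hF : MemLp F 2) (hG : MemLp G 2),
      ∫ t, F t * G t = inner ℂ (hF.star.toLp (star F)) (hG.toLp G) := by
    intro F G hF hG
    rw [L2.inner_def]
    refine integral_congr_ae ?_
    filter_upwards [hF.star.coeFn_toLp, hG.coeFn_toLp] with t h1 h2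
    rw [h1, h2]
    simp [mul_comm]
  simp only [e hA hB, fun n => e (hA' n) (hB' n)]
  refine Tendsto.inner ?_ ?_
  · rw [Lp.tendsto_Lp_iff_tendsto_eLpNorm'']
    refine tA.congr fun n => eLpNorm_congr_norm_ae (Eventually.of_forall fun t => ?_)
    rw [Pi.sub_apply, Pi.star_apply, Pi.star_apply, ← star_sub, norm_star]
  · rw [Lp.tendsto_Lp_iff_tendsto_eLpNorm'']
    exact tB

/-- The function `s ↦ e^{λ s} V s`. -/
def expW (l : ℝ) (V : ℝ → ℂ) (s : ℝ) : ℂ := Real.exp (l * s) • V s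

/-- The kernel `x ↦ e^{λ x} κ x`. -/
def twist (l : ℝ) (κ : ℝ → ℝ) (x : ℝ) : ℝ := Real.exp (l * x) * κ x

lemma mol_expW (l : ℝ) (κ : ℝ → ℝ) (V : ℝ → ℂ) (t : ℝ) :
    mol κ (expW l V) t = Real.exp (l * t) • mol (twist (-l) κ) V t := by
  rw [mol, mol, ← integral_smul]
  refine integral_congr_ae (Eventually.of_forall fun s => ?_)
  simp only [expW, twist, smul_smul]
  congr 1
  rw [← mul_assoc, ← Real.exp_add, mul_comm]
  congr 2
  ring

lemma continuous_twist (l : ℝ) {κ : ℝ → ℝ} (hκ : Continuous κ) : Continuous (twist l κ) := by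
  unfold twist
  fun_prop

lemma hasCompactSupport_twist (l : ℝ) {κ : ℝ → ℝ} (hκ : HasCompactSupport κ) :
    HasCompactSupport (twist l κ) :=
  hκ.mul_left

lemma integral_twist_pos (l : ℝ) {κ : ℝ → ℝ} (hκ : Continuous κ) (hc : HasCompactSupport κ)
    (h0 : ∀ s, 0 ≤ κ s) {x : ℝ} (hx : κ x ≠ 0) : 0 < ∫ s, twist l κ s :=
  (continuous_twist l hκ).integral_pos_of_hasCompactSupport_nonneg_nonzero
    (hasCompactSupport_twist l hc) (fun s => mul_nonneg (Real.exp_pos _).le (h0 s))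
    (x := x) (mul_ne_zero (Real.exp_pos _).ne' hx)

lemma mol_const_mul (c : ℝ) (κ : ℝ → ℝ) (V : ℝ → ℂ) (t : ℝ) :
    mol (fun s => c * κ s) V t = c * mol κ V t := by
  rw [mol, mol, ← integral_const_mul]
  refine integral_congr_ae (Eventually.of_forall fun s => ?_)
  simp [mul_assoc]

lemma LocallyIntegrable.expW {V : ℝ → ℂ} (hV : LocallyIntegrable V) (l : ℝ) :
    LocallyIntegrable (expW l V) := by
  rw [← locallyIntegrableOn_univ] at hV ⊢
  exact hV.continuousOn_smul isOpen_univ.isLocallyClosed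
    (show Continuous fun s : ℝ => Real.exp (l * s) by fun_prop).continuousOn

lemma smooth_iteratedDeriv {ρ : ℝ → ℝ} (hρ : ContDiff ℝ (⊤ : ℕ∞) ρ) (hc : HasCompactSupport ρ)
    (k : ℕ) : ContDiff ℝ (⊤ : ℕ∞) (iteratedDeriv k ρ) ∧ HasCompactSupport (iteratedDeriv k ρ) := by
  induction k with
  | zero => simpa using ⟨hρ, hc⟩
  | succ k ih =>
    rw [iteratedDeriv_succ]
    exact ⟨(contDiff_infty_iff_deriv.1 ih.1).2, ih.2.deriv⟩

lemma isJet_mol {ρ : ℝ → ℝ} (hρ : ContDiff ℝ (⊤ : ℕ∞) ρ) (hc : HasCompactSupport ρ)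
    {W : ℝ → ℂ} (hW : LocallyIntegrable W) : IsJet fun k => mol (iteratedDeriv k ρ) W := by
  intro k t
  have h := smooth_iteratedDeriv hρ hc k
  have := h.2.hasDerivAt_convolution_right (ContinuousLinearMap.lsmul ℝ ℝ).flip hW
    (h.1.of_le (by exact_mod_cast le_top)) t
  simp only [iteratedDeriv_succ]
  exact this

/-- The differential expression `∂⁴ - a ∂² + K` on real functions. -/
def realOp (a K : ℝ) (ρ : ℝ → ℝ) (t : ℝ) : ℝ :=
  iteratedDeriv 4 ρ t - a * iteratedDeriv 2 ρ t + K * ρ t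

/-- `e^{-2t} (∂⁴ - a ∂² + K) e^{-2t} U = V` in the sense of distributions, with `U, V ∈ L²`. -/
structure IsWeakSol (a K : ℝ) (U V : ℝ → ℂ) : Prop where
  memLp_left : MemLp U 2
  memLp_right : MemLp V 2
  meas_left : StronglyMeasurable U
  meas_right : StronglyMeasurable V
  weak : ∀ ρ : ℝ → ℝ, ContDiff ℝ (⊤ : ℕ∞) ρ → HasCompactSupport ρ →
    ∫ t, ρ t • expW 2 V t = ∫ t, realOp a K ρ t • expW (-2) U t

lemma jetOp_mol {a K : ℝ} {U V : ℝ → ℂ} (h : IsWeakSol a K U V) {ρ : ℝ → ℝ}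
    (hρ : ContDiff ℝ (⊤ : ℕ∞) ρ) (hc : HasCompactSupport ρ) (t : ℝ) :
    jetOp a K (fun k => mol (iteratedDeriv k ρ) (expW (-2) U)) t = mol ρ (expW 2 V) t := by
  have hW := LocallyIntegrable.expW (memLp_locallyIntegrable h.memLp_left) (-2)
  have hi : ∀ k, Integrable fun s => iteratedDeriv k ρ (t - s) • expW (-2) U s := fun k =>
    integrable_mol (smooth_iteratedDeriv hρ hc k).1.continuous (smooth_iteratedDeriv hρ hc k).2 hW t
  have hs : ContDiff ℝ (⊤ : ℕ∞) fun s => ρ (t - s) := by fun_prop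
  have hsc : HasCompactSupport fun s => ρ (t - s) :=
    hc.comp_homeomorph (Homeomorph.subLeft t)
  have hw := h.weak _ hs hsc
  rw [mol, hw]
  simp only [jetOp, mol, ← integral_const_mul]
  have i : Integrable fun s => iteratedDeriv 4 ρ (t - s) • expW (-2) U s -
      a * iteratedDeriv 2 ρ (t - s) • expW (-2) U s := (hi 4).sub ((hi 2).const_mul (a : ℂ))
  rw [← integral_sub (hi 4) ((hi 2).const_mul _), ← integral_add i ((hi 0).const_mul _)]
  refine integral_congr_ae (Eventually.of_forall fun s => ?_)
  simp only [realOp, iteratedDeriv_comp_const_sub, Complex.real_smul]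
  push_cast [smul_eq_mul]
  simp
  ring

lemma tendsto_exp_mul_mol {U : ℝ → ℂ} (hU : MemLp U 2) {κ : ℝ → ℝ} (hκ : Continuous κ)
    (hc : HasCompactSupport κ) :
    Tendsto (fun t => Real.exp (2 * t) * ‖mol κ (expW (-2) U) t‖) (cocompact ℝ) (𝓝 0) := by
  refine (tendsto_mol_cocompact (continuous_twist 2 hκ) (hasCompactSupport_twist 2 hc) hU).congr
    fun t => ?_
  rw [mol_expW, norm_smul, Real.norm_eq_abs, abs_of_pos (Real.exp_pos _), ← mul_assoc,
    ← Real.exp_add]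
  simp

lemma isBigO_mol {V : ℝ → ℂ} (hV : MemLp V 2) {κ : ℝ → ℝ} (hκ : Continuous κ)
    (hc : HasCompactSupport κ) :
    mol κ (expW 2 V) =O[atBot] fun t => Real.exp t := by
  have h := tendsto_mol_cocompact (continuous_twist (-2) hκ) (hasCompactSupport_twist (-2) hc) hV
  rw [cocompact_eq_atBot_atTop] at h
  refine IsBigO.of_bound 1 ?_
  filter_upwards [(h.mono_left le_sup_left).eventually (gt_mem_nhds zero_lt_one),
    eventually_le_atBot 0] with t ht ht0
  rw [mol_expW, norm_smul, Real.norm_eq_abs, abs_of_pos (Real.exp_pos _), Real.norm_eq_abs,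
    abs_of_pos (Real.exp_pos _), one_mul]
  calc _ ≤ Real.exp t * 1 := by gcongr; linarith
    _ = _ := mul_one _

lemma integral_mol_eq {a K : ℝ} {q₁ q₂ : ℂ} (h₁ : 2 ≤ q₁.re) (h₂ : 2 ≤ q₂.re)
    (ha : (a : ℂ) = q₁ ^ 2 + q₂ ^ 2) (hK : (K : ℂ) = q₁ ^ 2 * q₂ ^ 2)
    {U V U' V' : ℝ → ℂ} (h : IsWeakSol a K U V) (h' : IsWeakSol a K U' V') {ρ : ℝ → ℝ}
    (hρ : ContDiff ℝ (⊤ : ℕ∞) ρ) (hc : HasCompactSupport ρ)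
    (i₁ : Integrable fun t => mol (twist (-2) ρ) V t * mol (twist 2 ρ) U' t)
    (i₂ : Integrable fun t => mol (twist 2 ρ) U t * mol (twist (-2) ρ) V' t) :
    ∫ t, mol (twist (-2) ρ) V t * mol (twist 2 ρ) U' t =
      ∫ t, mol (twist 2 ρ) U t * mol (twist (-2) ρ) V' t := by
  have hk := smooth_iteratedDeriv hρ hc
  have e : ∀ A B : ℝ → ℂ, ∀ t, mol ρ (expW 2 A) t * mol ρ (expW (-2) B) t =
      mol (twist (-2) ρ) A t * mol (twist 2 ρ) B t := fun A B t => by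
    rw [mol_expW, mol_expW, smul_mul_smul_comm, ← Real.exp_add]
    simp
  have e' : ∀ A B : ℝ → ℂ, ∀ t, mol ρ (expW (-2) B) t * mol ρ (expW 2 A) t =
      mol (twist 2 ρ) B t * mol (twist (-2) ρ) A t := fun A B t => by
    rw [mul_comm, e, mul_comm]
  have key := integral_jetOp_eq h₁ h₂ ha hK
    (isJet_mol hρ hc (LocallyIntegrable.expW (memLp_locallyIntegrable h.memLp_left) (-2)))
    (isJet_mol hρ hc (LocallyIntegrable.expW (memLp_locallyIntegrable h'.memLp_left) (-2)))
    (fun k => tendsto_exp_mul_mol h.memLp_left (hk k).1.continuous (hk k).2)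
    (fun k => tendsto_exp_mul_mol h'.memLp_left (hk k).1.continuous (hk k).2)
  simp only [funext (jetOp_mol h hρ hc), funext (jetOp_mol h' hρ hc), iteratedDeriv_zero,
    e, e'] at key
  exact key (isBigO_mol h.memLp_right hρ.continuous hc) (isBigO_mol h'.memLp_right hρ.continuous hc)
    i₁ i₂

/-- Normalization of a kernel. -/
def normalized (κ : ℝ → ℝ) (s : ℝ) : ℝ := (∫ x, κ x)⁻¹ * κ s

/-- If all exponents of `∂⁴ - a ∂² + K` have real part of modulus at least two,
the maximal realization is symmetric. -/
theorem IsWeakSol.integral_eq {a K : ℝ} {q₁ q₂ : ℂ} (h₁ : 2 ≤ q₁.re) (h₂ : 2 ≤ q₂.re)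
    (ha : (a : ℂ) = q₁ ^ 2 + q₂ ^ 2) (hK : (K : ℂ) = q₁ ^ 2 * q₂ ^ 2)
    {U V U' V' : ℝ → ℂ} (h : IsWeakSol a K U V) (h' : IsWeakSol a K U' V') :
    ∫ t, V t * U' t = ∫ t, U t * V' t := by
  let b : ℕ → ContDiffBump (0 : ℝ) := fun n =>
    ⟨1 / ((n : ℝ) + 2), 1 / ((n : ℝ) + 1), by positivity, by gcongr; norm_num⟩
  let ρ : ℕ → ℝ → ℝ := fun n => b n
  have hρ : ∀ n, ContDiff ℝ (⊤ : ℕ∞) (ρ n) := fun n => (b n).contDiff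
  have hc : ∀ n, HasCompactSupport (ρ n) := fun n => (b n).hasCompactSupport
  have h0 : ∀ n s, 0 ≤ ρ n s := fun n s => (b n).nonneg
  have hx : ∀ n, ρ n 0 ≠ 0 := fun n =>
    ((b n).pos_of_mem_ball (Metric.mem_ball_self (b n).rOut_pos)).ne'
  let κ : ℝ → ℕ → ℝ → ℝ := fun l n => normalized (twist l (ρ n))
  have pos : ∀ l n, 0 < ∫ s, twist l (ρ n) s := fun l n =>
    integral_twist_pos l (hρ n).continuous (hc n) (h0 n) (hx n)
  have kc : ∀ l n, Continuous (κ l n) := fun l n =>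
    continuous_const.mul (continuous_twist l (hρ n).continuous)
  have kk : ∀ l n, HasCompactSupport (κ l n) := fun l n =>
    (hasCompactSupport_twist l (hc n)).mul_left
  have k0 : ∀ l n s, 0 ≤ κ l n s := fun l n s =>
    mul_nonneg (inv_nonneg.2 (pos l n).le) (mul_nonneg (Real.exp_pos _).le (h0 n s))
  have k1 : ∀ l n, ∫ s, κ l n s = 1 := fun l n => by
    simp only [κ, normalized]
    rw [integral_const_mul, inv_mul_cancel₀ (pos l n).ne']
  have ks : ∀ l n s, κ l n s ≠ 0 → |s| < 1 / ((n : ℝ) + 1) := fun l n s hs => by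
    have h2 : ρ n s ≠ 0 := right_ne_zero_of_mul (right_ne_zero_of_mul hs)
    by_contra! hcon
    exact h2 ((b n).zero_of_le_dist (by simpa [b] using hcon))
  have mem : ∀ l n {A : ℝ → ℂ}, MemLp A 2 → StronglyMeasurable A → MemLp (mol (κ l n) A) 2 :=
    fun l n A hA hm => memLp_mol (kc l n) (kk l n) (k0 l n) (k1 l n) hA hm
  have tt : ∀ l {A : ℝ → ℂ}, MemLp A 2 → StronglyMeasurable A →
      Tendsto (fun n => eLpNorm (fun t => mol (κ l n) A t - A t) 2) atTop (𝓝 0) :=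
    fun l A hA hm => tendsto_eLpNorm_mol_sub (kc l) (kk l) (k0 l) (k1 l) (ks l) hA hm
  have t1 := tendsto_integral_mul h.memLp_right h'.memLp_left
    (fun n => mem (-2) n h.memLp_right h.meas_right)
    (fun n => mem 2 n h'.memLp_left h'.meas_left)
    (tt (-2) h.memLp_right h.meas_right) (tt 2 h'.memLp_left h'.meas_left)
  have t2 := tendsto_integral_mul h.memLp_left h'.memLp_right
    (fun n => mem 2 n h.memLp_left h.meas_left)
    (fun n => mem (-2) n h'.memLp_right h'.meas_right)
    (tt 2 h.memLp_left h.meas_left) (tt (-2) h'.memLp_right h'.meas_right)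
  refine tendsto_nhds_unique (t1.congr fun n => ?_) t2
  have hm : ∀ l (A : ℝ → ℂ) t, mol (twist l (ρ n)) A t =
      ((∫ s, twist l (ρ n) s : ℝ) : ℂ) * mol (κ l n) A t := fun l A t => by
    simp only [κ]
    unfold normalized
    rw [mol_const_mul, ← mul_assoc, ← Complex.ofReal_mul, mul_inv_cancel₀ (pos l n).ne']
    simp
  have key := integral_mol_eq h₁ h₂ ha hK h h' (hρ n) (hc n)
  simp only [hm, mul_mul_mul_comm _ (mol _ _ _)] at key
  rw [integral_const_mul, integral_const_mul, mul_comm ((∫ s, twist (-2) (ρ n) s : ℝ) : ℂ)] at key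
  refine mul_left_cancel₀ (mul_ne_zero (Complex.ofReal_ne_zero.2 (pos 2 n).ne')
    (Complex.ofReal_ne_zero.2 (pos (-2) n).ne')) (key ?_ ?_)
  · exact ((mem (-2) n h.memLp_right h.meas_right).integrable_mul
      (mem 2 n h'.memLp_left h'.meas_left)).const_mul _
  · exact ((mem 2 n h.memLp_left h.meas_left).integrable_mul
      (mem (-2) n h'.memLp_right h'.meas_right)).const_mul _

lemma integral_lebIoi (F : ℝ → ℂ) : ∫ r, F r ∂lebIoi = ∫ t, Real.exp t • F (Real.exp t) := by
  have h := integral_image_eq_integral_abs_deriv_smul (s := univ) (f := Real.exp) (f' := Real.exp)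
    MeasurableSet.univ (fun x _ => (Real.hasDerivAt_exp x).hasDerivWithinAt)
    Real.exp_injective.injOn F
  rw [image_univ, Real.range_exp, Measure.restrict_univ] at h
  simpa [lebIoi, abs_of_pos (Real.exp_pos _)] using h

lemma integrable_lebIoi_iff (F : ℝ → ℝ) :
    Integrable F lebIoi ↔ Integrable fun t => Real.exp t * F (Real.exp t) := by
  have h := integrableOn_image_iff_integrableOn_abs_deriv_smul (s := univ) (f := Real.exp)
    (f' := Real.exp) MeasurableSet.univ (fun x _ => (Real.hasDerivAt_exp x).hasDerivWithinAt)
    Real.exp_injective.injOn F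
  rw [image_univ, Real.range_exp, integrableOn_univ] at h
  simpa [lebIoi, IntegrableOn, abs_of_pos (Real.exp_pos _)] using h

/-- The function `t ↦ e^{p t} φ(e^t)`. -/
def wgt (p : ℝ) (φ : ℝ → ℂ) (t : ℝ) : ℂ := Real.exp (p * t) * φ (Real.exp t)

/-- The function on `(0,∞)` corresponding to `U` under the unitary `wgt (1/2)`. -/
def push (U : ℝ → ℂ) (r : ℝ) : ℂ := Real.exp (-(1 / 2) * Real.log r) * U (Real.log r)

lemma exp_half_mul_self (t : ℝ) : Real.exp (1 / 2 * t) * Real.exp (1 / 2 * t) = Real.exp t := by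
  rw [← Real.exp_add]; ring_nf

lemma wgt_push (U : ℝ → ℂ) : wgt (1 / 2) (push U) = U := by
  funext t
  rw [wgt, push, Real.log_exp, ← mul_assoc, ← Complex.ofReal_mul, ← Real.exp_add]
  simp

lemma inner_eq_integral {f g : Lp ℂ 2 lebIoi} {φ ψ : ℝ → ℂ} (hf : (f : ℝ → ℂ) =ᵐ[lebIoi] φ)
    (hg : (g : ℝ → ℂ) =ᵐ[lebIoi] ψ) :
    inner ℂ f g = ∫ t, star (wgt (1 / 2) φ t) * wgt (1 / 2) ψ t := by
  have : inner ℂ f g = ∫ r, star (φ r) * ψ r ∂lebIoi := by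
    rw [L2.inner_def]
    refine integral_congr_ae ?_
    filter_upwards [hf, hg] with r h1 h2
    rw [h1, h2]
    simp [mul_comm]
  rw [this, integral_lebIoi]
  refine integral_congr_ae (Eventually.of_forall fun t => ?_)
  simp only [wgt, star_mul', Complex.star_def, Complex.conj_ofReal, Complex.real_smul]
  rw [← exp_half_mul_self]
  push_cast
  ring

lemma stronglyMeasurable_wgt (p : ℝ) {f : ℝ → ℂ} (hf : StronglyMeasurable f) :
    StronglyMeasurable (wgt p f) :=
  (show Continuous fun t : ℝ => ((Real.exp (p * t) : ℝ) : ℂ) by fun_prop).stronglyMeasurable.mul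
    (hf.comp_measurable Real.measurable_exp)

lemma norm_sq_wgt (f : ℝ → ℂ) (t : ℝ) :
    ‖wgt (1 / 2) f t‖ ^ 2 = Real.exp t * ‖f (Real.exp t)‖ ^ 2 := by
  rw [wgt, norm_mul, mul_pow, Complex.norm_real, Real.norm_eq_abs, abs_of_pos (Real.exp_pos _),
    sq (Real.exp _), exp_half_mul_self]

lemma memLp_wgt (f : Lp ℂ 2 lebIoi) : MemLp (wgt (1 / 2) f) 2 := by
  rw [memLp_two_iff_integrable_sq_norm
    (stronglyMeasurable_wgt _ (Lp.stronglyMeasurable f)).aestronglyMeasurable]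
  simp_rw [norm_sq_wgt]
  exact (integrable_lebIoi_iff fun r => ‖f r‖ ^ 2).1
    ((memLp_two_iff_integrable_sq_norm (Lp.aestronglyMeasurable f)).1 (Lp.memLp f))

lemma memLp_push {U : ℝ → ℂ} (hU : MemLp U 2) (hm : Measurable U) : MemLp (push U) 2 lebIoi := by
  have m : Measurable (push U) := by
    unfold push
    fun_prop
  rw [memLp_two_iff_integrable_sq_norm m.aestronglyMeasurable, integrable_lebIoi_iff]
  simp_rw [← norm_sq_wgt, wgt_push]
  exact (memLp_two_iff_integrable_sq_norm hU.1).1 hU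

/-- Test functions on the half-line. -/
structure IsTest (φ : ℝ → ℂ) : Prop where
  contDiff : ContDiff ℝ (⊤ : ℕ∞) φ
  compact : HasCompactSupport φ
  supp : tsupport φ ⊆ Ioi 0

lemma contDiff_wgt (p : ℝ) {φ : ℝ → ℂ} (h : ContDiffOn ℝ (⊤ : ℕ∞) φ (Ioi 0)) :
    ContDiff ℝ (⊤ : ℕ∞) (wgt p φ) := by
  have h1 : ContDiff ℝ (⊤ : ℕ∞) fun t => φ (Real.exp t) :=
    h.comp_contDiff Real.contDiff_exp fun t => Real.exp_pos t
  have h2 : ContDiff ℝ (⊤ : ℕ∞) fun t : ℝ => ((Real.exp (p * t) : ℝ) : ℂ) :=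
    Complex.ofRealCLM.contDiff.comp (Real.contDiff_exp.comp (contDiff_const.mul contDiff_id))
  exact h2.mul h1

lemma IsTest.hasCompactSupport_wgt (p : ℝ) {φ : ℝ → ℂ} (h : IsTest φ) :
    HasCompactSupport (wgt p φ) := by
  have hc : IsCompact (Real.log '' tsupport φ) := by
    refine h.compact.isCompact.image_of_continuousOn (Real.continuousOn_log.mono fun x hx => ?_)
    exact (h.supp hx).ne'
  refine HasCompactSupport.intro hc fun t ht => ?_
  have : φ (Real.exp t) = 0 := by
    by_contra hne
    exact ht ⟨Real.exp t, subset_tsupport _ hne, Real.log_exp t⟩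
  rw [wgt, this, mul_zero]

lemma exists_isTest {w : ℝ → ℂ} (hw : ContDiff ℝ (⊤ : ℕ∞) w) (hc : HasCompactSupport w) (p : ℝ) :
    ∃ φ, IsTest φ ∧ wgt p φ = w := by
  let φ : ℝ → ℂ := fun r =>
    if 0 < r then ((Real.exp (-p * Real.log r) : ℝ) : ℂ) * w (Real.log r) else 0
  have hK : IsCompact (Real.exp '' tsupport w) := hc.isCompact.image Real.continuous_exp
  have hz : ∀ r ∉ Real.exp '' tsupport w, φ r = 0 := fun r hr => by
    by_cases h0 : 0 < r
    · have : w (Real.log r) = 0 := by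
        by_contra hne
        exact hr ⟨Real.log r, subset_tsupport _ hne, Real.exp_log h0⟩
      simp [φ, this]
    · simp [φ, h0]
  have hsupp : tsupport φ ⊆ Real.exp '' tsupport w :=
    closure_minimal (fun r hr => by_contra fun h => hr (hz r h)) hK.isClosed
  have hpos : Real.exp '' tsupport w ⊆ Ioi 0 := by
    rintro _ ⟨t, -, rfl⟩
    exact Real.exp_pos t
  refine ⟨φ, ⟨contDiff_iff_contDiffAt.2 fun r => ?_, HasCompactSupport.intro hK hz,
    hsupp.trans hpos⟩, funext fun t => ?_⟩
  · by_cases h0 : 0 < r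
    · have hl : ContDiffAt ℝ (⊤ : ℕ∞) Real.log r := Real.contDiffAt_log.2 h0.ne'
      have h1 : ContDiffAt ℝ (⊤ : ℕ∞) (fun r => w (Real.log r)) r :=
        hw.contDiffAt.comp r hl
      have h2 : ContDiffAt ℝ (⊤ : ℕ∞)
          (fun r => ((Real.exp (-p * Real.log r) : ℝ) : ℂ)) r :=
        Complex.ofRealCLM.contDiff.contDiffAt.comp r
          (Real.contDiff_exp.contDiffAt.comp r (contDiffAt_const.mul hl))
      refine (h2.mul h1).congr_of_eventuallyEq ?_
      filter_upwards [lt_mem_nhds h0] with x hx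
      simp [φ, hx]
    · have hr : r ∉ Real.exp '' tsupport w := fun h => h0 (hpos h)
      refine contDiffAt_const (c := (0 : ℂ)) |>.congr_of_eventuallyEq ?_
      filter_upwards [hK.isClosed.isOpen_compl.mem_nhds hr] with x hx
      exact hz x hx
  · rw [wgt]
    simp only [φ, Real.exp_pos, if_true, Real.log_exp]
    rw [← mul_assoc, ← Complex.ofReal_mul, ← Real.exp_add]
    simp

lemma hasDerivAt_wgt (p : ℝ) {φ : ℝ → ℂ} (h : ContDiffOn ℝ (⊤ : ℕ∞) φ (Ioi 0)) (t : ℝ) :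
    HasDerivAt (wgt p φ) (p * wgt p φ t + wgt (p + 1) (deriv φ) t) t := by
  have h1 : HasDerivAt φ (deriv φ (Real.exp t)) (Real.exp t) :=
    ((h.contDiffAt (Ioi_mem_nhds (Real.exp_pos t))).differentiableAt
      (by simp)).hasDerivAt
  have h2 : HasDerivAt (fun t => φ (Real.exp t)) (Real.exp t • deriv φ (Real.exp t)) t :=
    h1.scomp t (Real.hasDerivAt_exp t)
  have h3 : HasDerivAt (fun t : ℝ => ((Real.exp (p * t) : ℝ) : ℂ))
      ((Real.exp (p * t) * p : ℝ) : ℂ) t := by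
    have := ((hasDerivAt_id t).const_mul p).exp.ofReal_comp
    simpa using this
  refine (h3.mul h2).congr_deriv ?_
  simp only [wgt, add_mul, Real.exp_add, one_mul, Complex.real_smul]
  push_cast
  ring

lemma contDiffOn_bExp (n ℓ : ℕ) {φ : ℝ → ℂ} (h : ContDiffOn ℝ (⊤ : ℕ∞) φ (Ioi 0)) :
    ContDiffOn ℝ (⊤ : ℕ∞) (bExp n ℓ φ) (Ioi 0) := by
  have h1 := ((contDiffOn_infty_iff_deriv_of_isOpen isOpen_Ioi).1 h).2
  have h2 := ((contDiffOn_infty_iff_deriv_of_isOpen isOpen_Ioi).1 h1).2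
  have h3 : ContDiffOn ℝ (⊤ : ℕ∞) (fun r : ℝ =>
      ((((n : ℝ) + 2 * ℓ - 1) * ((n : ℝ) + 2 * ℓ - 3)) / (4 * r ^ 2))) (Ioi 0) := by
    refine contDiffOn_const.div (contDiffOn_const.mul (contDiffOn_id.pow 2)) fun x hx => ?_
    have : x ≠ 0 := (mem_Ioi.1 hx).ne'
    simp [this]
  exact h2.sub ((Complex.ofRealCLM.contDiff.comp_contDiffOn h3).mul h)

lemma wgt_bExp (n ℓ : ℕ) (p q : ℝ) (hq : q = p - 2) {φ : ℝ → ℂ}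
    (h : ContDiffOn ℝ (⊤ : ℕ∞) φ (Ioi 0)) {y : ℕ → ℝ → ℂ} (hy : IsJet y)
    (h0 : wgt q φ = y 0) (t : ℝ) :
    wgt p (bExp n ℓ φ) t = y 2 t - (2 * p - 3) * y 1 t +
      ((p - 1) * (p - 2) - ((n : ℂ) + 2 * ℓ - 1) * ((n : ℂ) + 2 * ℓ - 3) / 4) * y 0 t := by
  subst hq
  have h1 := ((contDiffOn_infty_iff_deriv_of_isOpen isOpen_Ioi).1 h).2
  have e1 : ∀ t, y 1 t = (p - 2) * y 0 t + wgt (p - 1) (deriv φ) t := fun t => by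
    have := hasDerivAt_wgt (p - 2) h t
    rw [h0] at this
    rw [(hy 0 t).unique this]
    push_cast
    ring_nf
  have e2 : y 2 t = (p - 2) * y 1 t + ((p - 1) * wgt (p - 1) (deriv φ) t
      + wgt p (deriv (deriv φ)) t) := by
    have := ((hy 0 t).const_mul ((p : ℂ) - 2)).add (hasDerivAt_wgt (p - 1) h1 t)
    rw [(hy 1 t).unique (this.congr_of_eventuallyEq (Eventually.of_forall e1))]
    push_cast
    ring_nf
  have e3 : wgt p (bExp n ℓ φ) t = wgt p (deriv (deriv φ)) t -
      ((n : ℂ) + 2 * ℓ - 1) * ((n : ℂ) + 2 * ℓ - 3) / 4 * wgt (p - 2) φ t := by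
    have hne : (Real.exp t : ℂ) ≠ 0 := Complex.ofReal_ne_zero.2 (Real.exp_ne_zero t)
    have : Real.exp (p * t) = Real.exp ((p - 2) * t) * Real.exp t ^ 2 := by
      rw [← Real.exp_nat_mul, ← Real.exp_add]
      push_cast
      ring_nf
    simp only [wgt, bExp, this]
    push_cast at hne ⊢
    field_simp
  rw [e3, h0]
  linear_combination -e2 + (p - 1) * e1 t

/-- One step of the recursion for the derivatives of `e^{-2t} w`. -/
def jetD (w : ℕ → ℝ → ℂ) (k : ℕ) (t : ℝ) : ℂ := w (k + 1) t - 2 * w k t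

lemma IsJet.jetD {w : ℕ → ℝ → ℂ} (hw : IsJet w) : IsJet (jetD w) := fun k t =>
  (hw (k + 1) t).sub ((hw k t).const_mul 2)

lemma isJet_exp_mul {w : ℕ → ℝ → ℂ} (hw : IsJet w) :
    IsJet fun k t => Real.exp (-2 * t) * (EulerODE.jetD^[k] w) 0 t := fun k t => by
  have hk : ∀ k, IsJet (EulerODE.jetD^[k] w) := fun k => by
    induction k with
    | zero => exact hw
    | succ k ih => rw [Function.iterate_succ_apply']; exact ih.jetD
  have h3 : HasDerivAt (fun t : ℝ => ((Real.exp (-2 * t) : ℝ) : ℂ))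
      ((Real.exp (-2 * t) * -2 : ℝ) : ℂ) t := by
    have := ((hasDerivAt_id t).const_mul (-2 : ℝ)).exp.ofReal_comp
    simpa using this
  refine (h3.mul (hk k 0 t)).congr_deriv ?_
  simp only [Function.iterate_succ_apply', EulerODE.jetD]
  push_cast
  ring

/-- The coefficient of the second derivative. -/
def coefA (n ℓ : ℕ) : ℝ := 2 + 2 * (((n : ℝ) + 2 * ℓ - 2) / 2) ^ 2

/-- The coefficient of the zeroth derivative. -/
def coefK (n ℓ : ℕ) (c : ℝ) : ℝ := (1 - (((n : ℝ) + 2 * ℓ - 2) / 2) ^ 2) ^ 2 + c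

lemma wgt_tau (n ℓ : ℕ) (c : ℝ) {φ : ℝ → ℂ} (h : ContDiff ℝ (⊤ : ℕ∞) φ) {w : ℕ → ℝ → ℂ}
    (hw : IsJet w) (h0 : wgt (-(3 / 2)) φ = w 0) (t : ℝ) :
    wgt (1 / 2) (tau2nlExp n ℓ c φ) t =
      Real.exp (-2 * t) * jetOp (coefA n ℓ) (coefK n ℓ c) w t := by
  set y : ℕ → ℝ → ℂ := fun k t => Real.exp (-2 * t) * (EulerODE.jetD^[k] w) 0 t with hydef
  have hy : IsJet y := isJet_exp_mul hw
  have hy0 : wgt (-(7 / 2)) φ = y 0 := by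
    funext t
    simp only [hydef, Function.iterate_zero, id, ← h0, wgt]
    rw [← mul_assoc, ← Complex.ofReal_mul, ← Real.exp_add]
    ring_nf
  have hφ := h.contDiffOn (s := Ioi 0)
  set b : ℂ := ((n : ℂ) + 2 * ℓ - 1) * ((n : ℂ) + 2 * ℓ - 3) / 4 with hb
  let z : ℕ → ℝ → ℂ := fun k t => y (k + 2) t + 6 * y (k + 1) t + (35 / 4 - b) * y k t
  have hz : IsJet z := fun k t =>
    ((hy (k + 2) t).add ((hy (k + 1) t).const_mul 6)).add ((hy k t).const_mul (35 / 4 - b))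
  have hz0 : wgt (-(3 / 2)) (bExp n ℓ φ) = z 0 := by
    funext t
    rw [wgt_bExp n ℓ _ _ (by norm_num) hφ hy hy0]
    simp only [z]
    push_cast
    ring
  have e := wgt_bExp n ℓ (1 / 2) _ (by norm_num) (contDiffOn_bExp n ℓ hφ) hz hz0 t
  have e2 : wgt (1 / 2) (tau2nlExp n ℓ c φ) t =
      wgt (1 / 2) (bExp n ℓ (bExp n ℓ φ)) t + c * wgt (-(7 / 2)) φ t := by
    have hne : (Real.exp t : ℂ) ≠ 0 := Complex.ofReal_ne_zero.2 (Real.exp_ne_zero t)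
    have : Real.exp (1 / 2 * t) = Real.exp (-(7 / 2) * t) * Real.exp t ^ 4 := by
      rw [← Real.exp_nat_mul, ← Real.exp_add]
      push_cast
      ring_nf
    simp only [wgt, tau2nlExp, this]
    push_cast at hne ⊢
    field_simp
  rw [e2, e, hy0]
  simp only [z, hydef, Function.iterate_succ_apply', Function.iterate_zero, id,
    EulerODE.jetD, jetOp, coefA, coefK, hb]
  push_cast
  ring

section Abstract
variable {H : Type*} [NormedAddCommGroup H] [InnerProductSpace ℂ H]

lemma mem_adjoint_span {G : Set (H × H)} {x : H × H} :
    x ∈ (Submodule.span ℂ G).adjoint ↔ ∀ p ∈ G, inner ℂ p.2 x.1 = inner ℂ p.1 x.2 := by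
  rw [Submodule.mem_adjoint_iff]
  refine ⟨fun h p hp => sub_eq_zero.1 (h p.1 p.2 (Submodule.subset_span hp)), fun h a b hab => ?_⟩
  refine Submodule.span_induction (p := fun p _ => inner ℂ p.2 x.1 - inner ℂ p.1 x.2 = 0)
    (fun p hp => sub_eq_zero.2 (h p hp)) (by simp) (fun p q _ _ hp hq => ?_)
    (fun c p _ hp => ?_) hab
  · simp only [Prod.snd_add, Prod.fst_add, inner_add_left]
    linear_combination hp + hq
  · simp only [Prod.smul_snd, Prod.smul_fst, inner_smul_left, ← mul_sub, hp, mul_zero]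

/-- A symmetric operator given by generators of its graph is essentially self-adjoint
precisely when its adjoint is symmetric. -/
theorem essentiallySelfAdjoint_span_iff [CompleteSpace H] {G : Set (H × H)}
    (hs : ∀ p ∈ G, ∀ q ∈ G, inner ℂ p.2 q.1 = inner ℂ p.1 q.2)
    (hd : ∀ y : H, (∀ p ∈ G, inner ℂ p.1 y = 0) → y = 0) :
    EssentiallySelfAdjoint (Submodule.span ℂ G).toLinearPMap ↔
      ∀ x y : H × H, (∀ p ∈ G, inner ℂ p.2 x.1 = inner ℂ p.1 x.2) →
        (∀ p ∈ G, inner ℂ p.2 y.1 = inner ℂ p.1 y.2) → inner ℂ x.2 y.1 = inner ℂ x.1 y.2 := by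
  set g := Submodule.span ℂ G with hgdef
  have hle : g ≤ g.adjoint := Submodule.span_le.2 fun q hq =>
    mem_adjoint_span.2 fun p hp => hs p hp q hq
  have hg : ∀ x ∈ g, x.fst = 0 → x.snd = 0 := fun x hx h0 =>
    hd _ fun p hp => by
      rw [← mem_adjoint_span.1 (hle hx) p hp, h0, inner_zero_right]
  have hgraph : g.toLinearPMap.graph = g := Submodule.toLinearPMap_graph_eq _ hg
  have hdense : Dense (g.toLinearPMap.domain : Set H) := by
    rw [Submodule.dense_iff_topologicalClosure_eq_top, Submodule.topologicalClosure_eq_top_iff,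
      Submodule.eq_bot_iff]
    intro y hy
    refine hd y fun p hp => ?_
    rw [Submodule.mem_orthogonal] at hy
    exact hy _ ⟨p, Submodule.subset_span hp, rfl⟩
  have hadj : g.toLinearPMap.adjoint.graph = g.adjoint := by
    rw [LinearPMap.adjoint_graph_eq_graph_adjoint hdense, hgraph]
  have hdense' : Dense (g.toLinearPMap.adjoint.domain : Set H) := by
    refine hdense.mono fun x hx => ?_
    obtain ⟨p, hp, rfl⟩ := hx
    have := hle hp
    rw [← hadj] at this
    exact LinearPMap.mem_domain_of_mem_graph (y := p.2) this
  have hanti : g.adjoint.adjoint ≤ g.adjoint := fun x hx => by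
    rw [Submodule.mem_adjoint_iff] at hx ⊢
    exact fun a b hab => hx a b (hle hab)
  have hsa : IsSelfAdjoint g.toLinearPMap.adjoint ↔ g.adjoint ≤ g.adjoint.adjoint := by
    rw [LinearPMap.isSelfAdjoint_def]
    constructor
    · intro h
      rw [← hadj, ← LinearPMap.adjoint_graph_eq_graph_adjoint hdense', h]
    · intro h
      refine LinearPMap.eq_of_eq_graph ?_
      rw [LinearPMap.adjoint_graph_eq_graph_adjoint hdense', hadj]
      exact le_antisymm hanti h
  rw [EssentiallySelfAdjoint, and_iff_right hdense, hsa]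
  constructor
  · intro h x y hx hy
    exact sub_eq_zero.1 ((Submodule.mem_adjoint_iff _ _).1
      (h (mem_adjoint_span.2 hy)) x.1 x.2 (mem_adjoint_span.2 hx))
  · intro h y hy
    rw [Submodule.mem_adjoint_iff]
    exact fun a b hab => sub_eq_zero.2 (h (a, b) y (mem_adjoint_span.1 hab) (mem_adjoint_span.1 hy))

end Abstract

lemma IsJet.star {u : ℕ → ℝ → ℂ} (hu : IsJet u) : IsJet fun k t => star (u k t) := fun k t =>
  (hu k t).star

lemma jetOp_star (a K : ℝ) (u : ℕ → ℝ → ℂ) (t : ℝ) :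
    jetOp a K (fun k t => star (u k t)) t = star (jetOp a K u t) := by
  simp [jetOp]

/-- Lagrange's identity, integrated against a compactly supported function. -/
lemma integral_jetOp_eq_of_hasCompactSupport (a K : ℝ) {u v : ℕ → ℝ → ℂ} (hu : IsJet u)
    (hv : IsJet v) (hc : ∀ k, HasCompactSupport (v k)) :
    ∫ t, jetOp a K u t * v 0 t = ∫ t, u 0 t * jetOp a K v t := by
  have hcv : HasCompactSupport (jetOp a K v) :=
    ((hc 4).sub (hc 2).mul_left).add (hc 0).mul_left
  have i1 : Integrable fun t => jetOp a K u t * v 0 t :=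
    ((hu.continuous_jetOp a K).mul (hv.continuous 0)).integrable_of_hasCompactSupport
      (hc 0).mul_left
  have i2 : Integrable fun t => u 0 t * jetOp a K v t :=
    ((hu.continuous 0).mul (hv.continuous_jetOp a K)).integrable_of_hasCompactSupport
      hcv.mul_left
  have hcb : HasCompactSupport (bracket a u v) :=
    ((((hc 0).mul_left.sub (hc 1).mul_left).add (hc 2).mul_left).sub (hc 3).mul_left).sub
      (((hc 0).mul_left.sub (hc 1).mul_left).mul_left (f := fun _ => (a : ℂ)))
  have hcont : Continuous (bracket a u v) := continuous_iff_continuousAt.2 fun t =>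
    (hasDerivAt_bracket a K hu hv t).continuousAt
  rw [← sub_eq_zero, ← integral_sub i1 i2]
  exact integral_eq_zero_of_hasDerivAt_of_integrable (hasDerivAt_bracket a K hu hv) (i1.sub i2)
    (hcont.integrable_of_hasCompactSupport hcb)

lemma hasCompactSupport_iteratedDeriv {f : ℝ → ℂ} (hc : HasCompactSupport f) (k : ℕ) :
    HasCompactSupport (iteratedDeriv k f) := by
  induction k with
  | zero => simpa using hc
  | succ k ih => rw [iteratedDeriv_succ]; exact ih.deriv

lemma memLp_of_wgt {F : ℝ → ℂ} (h : MemLp (wgt (1 / 2) F) 2) (hm : Measurable (wgt (1 / 2) F)) :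
    MemLp F 2 lebIoi := by
  refine (memLp_push h hm).ae_eq ?_
  refine (ae_restrict_iff' measurableSet_Ioi).2 (Eventually.of_forall fun r hr => ?_)
  simp only [push, wgt]
  rw [← mul_assoc, ← Complex.ofReal_mul, ← Real.exp_add, Real.exp_log hr]
  simp

lemma star_ofReal_mul (r : ℝ) (z : ℂ) : star ((r : ℂ) * z) = r * star z := by
  simp [Complex.conj_ofReal]

lemma exp_neg_mul_exp (t : ℝ) (x y : ℂ) :
    (Real.exp (-2 * t) : ℂ) * x * ((Real.exp (2 * t) : ℂ) * y) = x * y := by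
  rw [mul_mul_mul_comm, ← Complex.ofReal_mul, ← Real.exp_add]
  simp

lemma exp_mul_exp_neg (t : ℝ) (x y : ℂ) :
    (Real.exp (2 * t) : ℂ) * x * ((Real.exp (-2 * t) : ℂ) * y) = x * y := by
  rw [mul_mul_mul_comm, ← Complex.ofReal_mul, ← Real.exp_add]
  simp

/-- The generators of the graph of the minimal operator. -/
def generators (n ℓ : ℕ) (c : ℝ) : Set (Lp ℂ 2 lebIoi × Lp ℂ 2 lebIoi) :=
  {p | ∃ φ : ℝ → ℂ, ContDiff ℝ (⊤ : ℕ∞) φ ∧ HasCompactSupport φ ∧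
    tsupport φ ⊆ Set.Ioi 0 ∧
    (p.1 : ℝ → ℂ) =ᵐ[lebIoi] φ ∧ (p.2 : ℝ → ℂ) =ᵐ[lebIoi] tau2nlExp n ℓ c φ}

/-- The pair `p` is represented on the real line by the test function `w`. -/
def Represents (n ℓ : ℕ) (c : ℝ) (w : ℝ → ℂ) (p : Lp ℂ 2 lebIoi × Lp ℂ 2 lebIoi) : Prop :=
  ∃ f g : ℝ → ℂ, (p.1 : ℝ → ℂ) =ᵐ[lebIoi] f ∧ (p.2 : ℝ → ℂ) =ᵐ[lebIoi] g ∧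
    (∀ t, wgt (1 / 2) f t = Real.exp (2 * t) * w t) ∧
    ∀ t, wgt (1 / 2) g t = Real.exp (-2 * t) *
      jetOp (coefA n ℓ) (coefK n ℓ c) (fun k => iteratedDeriv k w) t

lemma exists_represents {n ℓ : ℕ} {c : ℝ} {p} (hp : p ∈ generators n ℓ c) :
    ∃ w, ContDiff ℝ (⊤ : ℕ∞) w ∧ HasCompactSupport w ∧ Represents n ℓ c w p := by
  obtain ⟨φ, h1, h2, h3, h4, h5⟩ := hp
  have hw := contDiff_wgt (-(3 / 2)) (h1.contDiffOn (s := Ioi 0))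
  refine ⟨wgt (-(3 / 2)) φ, hw, IsTest.hasCompactSupport_wgt _ ⟨h1, h2, h3⟩, φ, _, h4, h5,
    fun t => ?_, fun t => wgt_tau n ℓ c h1 (isJet_iteratedDeriv hw) (by simp) t⟩
  simp only [wgt]
  rw [← mul_assoc, ← Complex.ofReal_mul, ← Real.exp_add]
  ring_nf

lemma exists_mem_generators (n ℓ : ℕ) (c : ℝ) {w : ℝ → ℂ} (hw : ContDiff ℝ (⊤ : ℕ∞) w)
    (hc : HasCompactSupport w) : ∃ p ∈ generators n ℓ c, Represents n ℓ c w p := by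
  obtain ⟨φ, hφ, rfl⟩ := exists_isTest hw hc (-(3 / 2))
  have hj := isJet_iteratedDeriv hw
  have hcj := hasCompactSupport_iteratedDeriv hc
  have e1 : ∀ t, wgt (1 / 2) φ t = Real.exp (2 * t) * wgt (-(3 / 2)) φ t := fun t => by
    simp only [wgt]
    rw [← mul_assoc, ← Complex.ofReal_mul, ← Real.exp_add]
    ring_nf
  have e2 := wgt_tau n ℓ c hφ.contDiff hj (by simp)
  have hexp : ∀ l : ℝ, Continuous fun t : ℝ => ((Real.exp (l * t) : ℝ) : ℂ) := fun l => by fun_prop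
  have c1 : Continuous (wgt (1 / 2) φ) := by
    rw [funext e1]
    exact (hexp 2).mul hw.continuous
  have c2 : Continuous (wgt (1 / 2) (tau2nlExp n ℓ c φ)) := by
    rw [funext e2]
    exact (hexp _).mul (hj.continuous_jetOp _ _)
  have k1 : HasCompactSupport (wgt (1 / 2) φ) := hφ.hasCompactSupport_wgt _
  have k2 : HasCompactSupport (wgt (1 / 2) (tau2nlExp n ℓ c φ)) := by
    rw [funext e2]
    exact (((hcj 4).sub (hcj 2).mul_left).add (hcj 0).mul_left).mul_left
  have m1 := memLp_of_wgt (c1.memLp_of_hasCompactSupport k1) c1.measurable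
  have m2 := memLp_of_wgt (c2.memLp_of_hasCompactSupport k2) c2.measurable
  exact ⟨(m1.toLp _, m2.toLp _),
    ⟨φ, hφ.contDiff, hφ.compact, hφ.supp, m1.coeFn_toLp, m2.coeFn_toLp⟩,
    φ, _, m1.coeFn_toLp, m2.coeFn_toLp, e1, e2⟩

lemma generators_symmetric (n ℓ : ℕ) (c : ℝ) :
    ∀ p ∈ generators n ℓ c, ∀ q ∈ generators n ℓ c, inner ℂ p.2 q.1 = inner ℂ p.1 q.2 := by
  intro p hp q hq
  obtain ⟨w, hw, -, f, g, h1, h2, e1, e2⟩ := exists_represents hp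
  obtain ⟨w', hw', hc', f', g', h1', h2', e1', e2'⟩ := exists_represents hq
  rw [inner_eq_integral h2 h1', inner_eq_integral h1 h2']
  have key := integral_jetOp_eq_of_hasCompactSupport (coefA n ℓ) (coefK n ℓ c)
    (isJet_iteratedDeriv hw).star (isJet_iteratedDeriv hw') (hasCompactSupport_iteratedDeriv hc')
  simp only [iteratedDeriv_zero, jetOp_star] at key
  refine (integral_congr_ae (Eventually.of_forall fun t => ?_)).trans
    (key.trans (integral_congr_ae (Eventually.of_forall fun t => ?_)))
  · simp only [e2, e1', star_ofReal_mul, exp_neg_mul_exp]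
  · simp only [e1, e2', star_ofReal_mul, exp_mul_exp_neg]

lemma isJet_ofReal {ρ : ℝ → ℝ} (hρ : ContDiff ℝ (⊤ : ℕ∞) ρ) :
    IsJet fun k t => ((iteratedDeriv k ρ t : ℝ) : ℂ) := fun k t => by
  have h : DifferentiableAt ℝ (iteratedDeriv k ρ) t :=
    (hρ.differentiable_iteratedDeriv k (by exact_mod_cast WithTop.coe_lt_top _)) t
  have := h.hasDerivAt.ofReal_comp
  rwa [← iteratedDeriv_succ] at this

lemma jetOp_ofReal (a K : ℝ) {ρ : ℝ → ℝ} (hρ : ContDiff ℝ (⊤ : ℕ∞) ρ) (t : ℝ) :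
    jetOp a K (fun k => iteratedDeriv k fun t => ((ρ t : ℝ) : ℂ)) t = realOp a K ρ t := by
  have h := (isJet_ofReal hρ).eq_iteratedDeriv
  simp only [iteratedDeriv_zero] at h
  simp [jetOp, realOp, h]

lemma exists_mem_generators_real (n ℓ : ℕ) (c : ℝ) {ρ : ℝ → ℝ} (hρ : ContDiff ℝ (⊤ : ℕ∞) ρ)
    (hc : HasCompactSupport ρ) : ∃ p ∈ generators n ℓ c, ∀ x : Lp ℂ 2 lebIoi,
      inner ℂ p.1 x = ∫ t, ρ t • expW 2 (wgt (1 / 2) x) t ∧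
      inner ℂ p.2 x = ∫ t, realOp (coefA n ℓ) (coefK n ℓ c) ρ t • expW (-2) (wgt (1 / 2) x) t := by
  obtain ⟨p, hp, f, g, h1, h2, e1, e2⟩ := exists_mem_generators n ℓ c
    (w := fun t => (ρ t : ℂ)) (Complex.ofRealCLM.contDiff.comp hρ)
    (hc.comp_left Complex.ofReal_zero)
  refine ⟨p, hp, fun x => ⟨?_, ?_⟩⟩
  · rw [inner_eq_integral h1 (EventuallyEq.refl _ _)]
    refine integral_congr_ae (Eventually.of_forall fun t => ?_)
    simp only [e1, expW, star_mul', Complex.star_def, Complex.conj_ofReal, Complex.real_smul]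
    ring
  · rw [inner_eq_integral h2 (EventuallyEq.refl _ _)]
    refine integral_congr_ae (Eventually.of_forall fun t => ?_)
    simp only [e2, jetOp_ofReal _ _ hρ, expW, star_mul', Complex.star_def, Complex.conj_ofReal,
      Complex.real_smul]
    ring

lemma generators_total (n ℓ : ℕ) (c : ℝ) (y : Lp ℂ 2 lebIoi)
    (hy : ∀ p ∈ generators n ℓ c, inner ℂ p.1 y = 0) : y = 0 := by
  have h0 : ∀ᵐ t, expW 2 (wgt (1 / 2) y) t = 0 := by
    refine ae_eq_zero_of_integral_contDiff_smul_eq_zero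
      (LocallyIntegrable.expW (memLp_locallyIntegrable (memLp_wgt y)) 2) fun ρ hρ hc => ?_
    obtain ⟨p, hp, h⟩ := exists_mem_generators_real n ℓ c hρ hc
    rw [← (h y).1, hy p hp]
  rw [← inner_self_eq_zero (𝕜 := ℂ), inner_eq_integral (EventuallyEq.refl _ _)
    (EventuallyEq.refl _ _)]
  refine integral_eq_zero_of_ae ?_
  filter_upwards [h0] with t ht
  have : wgt (1 / 2) y t = 0 := by
    simpa [expW] using ht
  rw [this, mul_zero]
  rfl

lemma essentiallySelfAdjoint_iff (n ℓ : ℕ) (c : ℝ) :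
    EssentiallySelfAdjoint (tau2nlOp n ℓ c) ↔
      ∀ x y : Lp ℂ 2 lebIoi × Lp ℂ 2 lebIoi,
        (∀ p ∈ generators n ℓ c, inner ℂ p.2 x.1 = inner ℂ p.1 x.2) →
        (∀ p ∈ generators n ℓ c, inner ℂ p.2 y.1 = inner ℂ p.1 y.2) →
        inner ℂ x.2 y.1 = inner ℂ x.1 y.2 :=
  essentiallySelfAdjoint_span_iff (generators_symmetric n ℓ c) (generators_total n ℓ c)

lemma isWeakSol_of_forall {n ℓ : ℕ} {c : ℝ} {x : Lp ℂ 2 lebIoi × Lp ℂ 2 lebIoi}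
    (h : ∀ p ∈ generators n ℓ c, inner ℂ p.2 x.1 = inner ℂ p.1 x.2) :
    IsWeakSol (coefA n ℓ) (coefK n ℓ c) (wgt (1 / 2) x.1) (wgt (1 / 2) x.2) where
  memLp_left := memLp_wgt _
  memLp_right := memLp_wgt _
  meas_left := stronglyMeasurable_wgt _ (Lp.stronglyMeasurable _)
  meas_right := stronglyMeasurable_wgt _ (Lp.stronglyMeasurable _)
  weak := fun ρ hρ hc => by
    obtain ⟨p, hp, e⟩ := exists_mem_generators_real n ℓ c hρ hc
    rw [← (e _).1, ← (e _).2, h p hp]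

lemma IsWeakSol.star {a K : ℝ} {U V : ℝ → ℂ} (h : IsWeakSol a K U V) :
    IsWeakSol a K (fun t => star (U t)) fun t => star (V t) where
  memLp_left := h.memLp_left.star
  memLp_right := h.memLp_right.star
  meas_left := h.meas_left.star
  meas_right := h.meas_right.star
  weak := fun ρ hρ hc => by
    have := congrArg Star.star (h.weak ρ hρ hc)
    simp only [Complex.star_def, ← integral_conj] at this ⊢
    simpa [expW, Complex.conj_ofReal, -Complex.ofReal_exp] using this

theorem essentiallySelfAdjoint_of_re {n ℓ : ℕ} {c : ℝ} {q₁ q₂ : ℂ} (h₁ : 2 ≤ q₁.re)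
    (h₂ : 2 ≤ q₂.re) (ha : (coefA n ℓ : ℂ) = q₁ ^ 2 + q₂ ^ 2)
    (hK : (coefK n ℓ c : ℂ) = q₁ ^ 2 * q₂ ^ 2) :
    EssentiallySelfAdjoint (tau2nlOp n ℓ c) := by
  refine (essentiallySelfAdjoint_iff n ℓ c).2 fun x y hx hy => ?_
  rw [inner_eq_integral (EventuallyEq.refl _ _) (EventuallyEq.refl _ _),
    inner_eq_integral (EventuallyEq.refl _ _) (EventuallyEq.refl _ _)]
  exact IsWeakSol.integral_eq h₁ h₂ ha hK (isWeakSol_of_forall hx).star (isWeakSol_of_forall hy)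

lemma exists_pair {n ℓ : ℕ} {c : ℝ} {F : ℕ → ℝ → ℂ} (hF : IsJet F)
    (m1 : MemLp (fun t => Real.exp (2 * t) * F 0 t) 2)
    (m2 : MemLp (fun t => Real.exp (-2 * t) * jetOp (coefA n ℓ) (coefK n ℓ c) F t) 2) :
    ∃ x : Lp ℂ 2 lebIoi × Lp ℂ 2 lebIoi, ∃ f g : ℝ → ℂ,
      (x.1 : ℝ → ℂ) =ᵐ[lebIoi] f ∧ (x.2 : ℝ → ℂ) =ᵐ[lebIoi] g ∧
      (wgt (1 / 2) f = fun t => Real.exp (2 * t) * F 0 t) ∧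
      (wgt (1 / 2) g = fun t => Real.exp (-2 * t) * jetOp (coefA n ℓ) (coefK n ℓ c) F t) ∧
      ∀ p ∈ generators n ℓ c, inner ℂ p.2 x.1 = inner ℂ p.1 x.2 := by
  have hexp : ∀ l : ℝ, Continuous fun t : ℝ => ((Real.exp (l * t) : ℝ) : ℂ) := fun l => by fun_prop
  have n1 := memLp_push m1 ((hexp 2).mul (hF.continuous 0)).measurable
  have n2 := memLp_push m2 ((hexp (-2)).mul (hF.continuous_jetOp _ _)).measurable
  refine ⟨(n1.toLp _, n2.toLp _), _, _, n1.coeFn_toLp, n2.coeFn_toLp, wgt_push _, wgt_push _,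
    fun p hp => ?_⟩
  obtain ⟨w, hw, hc, f, g, h1, h2, e1, e2⟩ := exists_represents hp
  rw [inner_eq_integral h2 n1.coeFn_toLp, inner_eq_integral h1 n2.coeFn_toLp, wgt_push, wgt_push]
  have key := integral_jetOp_eq_of_hasCompactSupport (coefA n ℓ) (coefK n ℓ c)
    hF (isJet_iteratedDeriv hw).star
    (fun k => (hasCompactSupport_iteratedDeriv hc k).comp_left (star_zero ℂ))
  simp only [iteratedDeriv_zero, jetOp_star] at key
  refine (integral_congr_ae (Eventually.of_forall fun t => ?_)).trans
    (key.symm.trans (integral_congr_ae (Eventually.of_forall fun t => ?_)))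
  · simp only [e2, star_ofReal_mul, exp_neg_mul_exp, mul_comm (F 0 t)]
  · simp only [e1, star_ofReal_mul, exp_mul_exp_neg, mul_comm (star (w t))]

theorem not_essentiallySelfAdjoint {n ℓ : ℕ} {c : ℝ} {F G : ℕ → ℝ → ℂ} (hF : IsJet F)
    (hG : IsJet G) (f1 : MemLp (fun t => Real.exp (2 * t) * F 0 t) 2)
    (f2 : MemLp (fun t => Real.exp (-2 * t) * jetOp (coefA n ℓ) (coefK n ℓ c) F t) 2)
    (g1 : MemLp (fun t => Real.exp (2 * t) * G 0 t) 2)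
    (g2 : MemLp (fun t => Real.exp (-2 * t) * jetOp (coefA n ℓ) (coefK n ℓ c) G t) 2)
    (hne : ∫ t, jetOp (coefA n ℓ) (coefK n ℓ c) F t * G 0 t ≠
      ∫ t, F 0 t * jetOp (coefA n ℓ) (coefK n ℓ c) G t) :
    ¬ EssentiallySelfAdjoint (tau2nlOp n ℓ c) := by
  intro h
  have s1 : MemLp (fun t => Real.exp (2 * t) * star (F 0 t)) 2 := by
    refine f1.star.ae_eq (Eventually.of_forall fun t => ?_)
    simp only [Pi.star_apply, star_ofReal_mul]
  have s2 : MemLp (fun t => Real.exp (-2 * t) *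
      jetOp (coefA n ℓ) (coefK n ℓ c) (fun k t => star (F k t)) t) 2 := by
    refine f2.star.ae_eq (Eventually.of_forall fun t => ?_)
    simp only [jetOp_star, Pi.star_apply, star_ofReal_mul]
  obtain ⟨x, a, b, ha, hb, ea, eb, hx⟩ := exists_pair hF.star s1 s2
  obtain ⟨y, a', b', ha', hb', ea', eb', hy⟩ := exists_pair hG g1 g2
  have key := (essentiallySelfAdjoint_iff n ℓ c).1 h x y hx hy
  rw [inner_eq_integral hb ha', inner_eq_integral ha hb', ea, eb, ea', eb'] at key
  refine hne ((integral_congr_ae (Eventually.of_forall fun t => ?_)).trans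
    (key.trans (integral_congr_ae (Eventually.of_forall fun t => ?_))))
  · simp only [jetOp_star, star_ofReal_mul, star_star, exp_neg_mul_exp]
  · simp only [star_ofReal_mul, star_star, exp_mul_exp_neg]

/-- The derivatives of `(α + β t) exp (q t)`. -/
def expJet (q : ℂ) : ℂ → ℂ → ℕ → ℝ → ℂ
  | α, β, 0 => fun t => (α + β * t) * Complex.exp (q * t)
  | α, β, k + 1 => expJet q (q * α + β) (q * β) k

lemma isJet_expJet (q α β : ℂ) : IsJet (expJet q α β) := fun k t => by
  induction k generalizing α β with
  | zero =>
    have h : HasDerivAt (fun t : ℝ => α + β * (t : ℂ)) β t := by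
      simpa using ((Complex.ofRealCLM.hasDerivAt (x := t)).const_mul β).const_add α
    refine (h.mul (hasDerivAt_cexp_mul q t)).congr_deriv ?_
    simp only [expJet]
    ring
  | succ k ih => exact ih _ _

lemma contDiff_expJet (q α β : ℂ) : ContDiff ℝ (⊤ : ℕ∞) (expJet q α β 0) := by
  have h : ContDiff ℝ (⊤ : ℕ∞) fun t : ℝ => (t : ℂ) := Complex.ofRealCLM.contDiff
  have h' : ContDiff ℝ (⊤ : ℕ∞) fun t : ℝ => Complex.exp (q * t) :=
    Complex.contDiff_exp.comp (contDiff_const.mul h)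
  exact (contDiff_const.add (contDiff_const.mul h)).mul h'

lemma isBigO_expJet {q : ℂ} (hq : |q.re| < 2) (α β : ℂ) :
    ∃ δ > 0, (fun t => Real.exp (2 * t) * expJet q α β 0 t) =O[atBot]
        fun t => Real.exp (δ * t) := by
  obtain ⟨h1, h2⟩ := abs_lt.1 hq
  refine ⟨(2 + q.re) / 2, by linarith, ?_⟩
  have hl : (fun t : ℝ => α + β * (t : ℂ)) =O[atBot]
      fun t => Real.exp (-(((2 + q.re) / 2) * t)) := by
    have ht : Tendsto (fun t : ℝ => (2 + q.re) / 2 * -t) atBot atTop :=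
      tendsto_neg_atBot_atTop.const_mul_atTop (by linarith)
    have hone : (fun _ : ℝ => (1 : ℂ)) =O[atBot] fun t => Real.exp (-(((2 + q.re) / 2) * t)) := by
      refine IsBigO.of_bound 1 (eventually_atBot.2 ⟨0, fun t ht => ?_⟩)
      rw [norm_one, one_mul, Real.norm_of_nonneg (Real.exp_pos _).le]
      exact Real.one_le_exp (by nlinarith)
    have hid : (fun t : ℝ => (t : ℂ)) =O[atBot] fun t => Real.exp (-(((2 + q.re) / 2) * t)) := by
      refine IsBigO.of_bound (2 / (2 + q.re)) (eventually_atBot.2 ⟨0, fun t ht => ?_⟩)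
      rw [Complex.norm_real, Real.norm_of_nonpos ht, Real.norm_of_nonneg (Real.exp_pos _).le]
      have := Real.add_one_le_exp (-(((2 + q.re) / 2) * t))
      rw [div_mul_eq_mul_div, le_div_iff₀ (by linarith)]
      nlinarith
    have := (hone.const_mul_left α).add (hid.const_mul_left β)
    simpa using this
  have he : (fun t : ℝ => (Real.exp (2 * t) : ℂ) * Complex.exp (q * t)) =O[atBot]
      fun t => Real.exp ((2 + q.re) * t) := by
    refine IsBigO.of_bound 1 (Eventually.of_forall fun t => ?_)
    rw [norm_mul, norm_cexp_mul, Complex.norm_real, Real.norm_of_nonneg (Real.exp_pos _).le,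
      Real.norm_of_nonneg (Real.exp_pos _).le, ← Real.exp_add, one_mul, add_mul]
  refine (hl.mul he).congr (fun t => ?_) fun t => ?_
  · simp only [expJet]; ring
  · rw [← Real.exp_add]; congr 1; ring

/-- A smooth function equal to `1` on `(-∞, 1]` and to `0` on `[2, ∞)`. -/
def cutoff (t : ℝ) : ℂ := (Real.smoothTransition (2 - t) : ℝ)

lemma contDiff_cutoff : ContDiff ℝ (⊤ : ℕ∞) cutoff :=
  Complex.ofRealCLM.contDiff.comp
    (Real.smoothTransition.contDiff.comp (contDiff_const.sub contDiff_id))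

/-- The derivatives of the product of `cutoff` with `u 0`. -/
def cutJet (u : ℕ → ℝ → ℂ) (k : ℕ) : ℝ → ℂ := iteratedDeriv k fun t => cutoff t * u 0 t

lemma isJet_cutJet {u : ℕ → ℝ → ℂ} (hc : ContDiff ℝ (⊤ : ℕ∞) (u 0)) : IsJet (cutJet u) :=
  isJet_iteratedDeriv (contDiff_cutoff.mul hc)

lemma cutJet_of_lt {u : ℕ → ℝ → ℂ} (hu : IsJet u) (k : ℕ) {t : ℝ} (ht : t < 1) :
    cutJet u k t = u k t := by
  rw [← hu.eq_iteratedDeriv k]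
  refine Filter.EventuallyEq.iteratedDeriv_eq k ?_
  filter_upwards [Iio_mem_nhds ht] with s hs
  simp [cutoff, Real.smoothTransition.one_of_one_le (show (1 : ℝ) ≤ 2 - s by
    linarith [show s < 1 from hs])]

lemma cutJet_of_gt (u : ℕ → ℝ → ℂ) (k : ℕ) {t : ℝ} (ht : 2 < t) : cutJet u k t = 0 := by
  have h : (fun t => cutoff t * u 0 t) =ᶠ[𝓝 t] fun _ => 0 := by
    filter_upwards [Ioi_mem_nhds ht] with s hs
    simp [cutoff, Real.smoothTransition.zero_of_nonpos (show 2 - s ≤ 0 by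
      linarith [show 2 < s from hs])]
  rw [cutJet, h.iteratedDeriv_eq k]
  simp

lemma jetOp_cutJet {a K : ℝ} {u : ℕ → ℝ → ℂ} (hu : IsJet u) (h0 : ∀ t, jetOp a K u t = 0) {t : ℝ}
    (ht : t ∉ Icc (0 : ℝ) 3) : jetOp a K (cutJet u) t = 0 := by
  rcases lt_or_ge t 0 with h | h
  · have h1 : t < 1 := by linarith
    rw [← h0 t]
    simp only [jetOp, cutJet_of_lt hu _ h1]
  · have h2 : 2 < t := by
      by_contra! h2
      exact ht ⟨h, by linarith⟩
    simp [jetOp, cutJet_of_gt _ _ h2]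

lemma hasCompactSupport_jetOp_cutJet {a K : ℝ} {u : ℕ → ℝ → ℂ} (hu : IsJet u)
    (h0 : ∀ t, jetOp a K u t = 0) : HasCompactSupport (jetOp a K (cutJet u)) :=
  HasCompactSupport.intro isCompact_Icc fun _ ht => jetOp_cutJet hu h0 ht

lemma memLp_two_of_isBigO {f : ℝ → ℂ} (hf : Continuous f) {δ : ℝ} (hδ : 0 < δ)
    (hO : f =O[atBot] fun t => Real.exp (δ * t)) (h0 : ∀ t, 2 < t → f t = 0) : MemLp f 2 := by
  rw [memLp_two_iff_integrable_sq_norm hf.aestronglyMeasurable]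
  have hc : Continuous fun t => ‖f t‖ ^ 2 := by fun_prop
  refine hc.locallyIntegrable.integrable_of_isBigO_atBot_atTop
    (g := fun t => Real.exp (2 * δ * t)) (g' := fun _ => (0 : ℝ)) ?_ ?_ ?_ ?_
  · refine (hO.norm_left.pow 2).congr_right fun t => ?_
    rw [← Real.exp_nat_mul]
    congr 1
    push_cast
    ring
  · exact ⟨Iic 0, Iic_mem_atBot 0, integrableOn_exp_mul_Iic (by linarith) 0⟩
  · refine EventuallyEq.isBigO ?_
    filter_upwards [eventually_gt_atTop 2] with t ht
    simp [h0 t ht]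
  · exact ⟨univ, univ_mem, integrableOn_zero⟩

lemma memLp_exp_mul_cutJet {u : ℕ → ℝ → ℂ} (hu : IsJet u) (hc : ContDiff ℝ (⊤ : ℕ∞) (u 0))
    (hO : ∃ δ > 0, (fun t => Real.exp (2 * t) * u 0 t) =O[atBot] fun t => Real.exp (δ * t)) :
    MemLp (fun t => Real.exp (2 * t) * cutJet u 0 t) 2 := by
  obtain ⟨δ, hδ, hO⟩ := hO
  have := (isJet_cutJet hc).continuous 0
  refine memLp_two_of_isBigO (by fun_prop) hδ (hO.congr' ?_ EventuallyEq.rfl) fun t ht => ?_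
  · filter_upwards [eventually_lt_atBot 1] with t ht
    rw [cutJet_of_lt hu 0 ht]
  · rw [cutJet_of_gt u 0 ht, mul_zero]

/-- Two solutions of `u⁗ - a u″ + K u = 0` that are square integrable near `-∞` for the weight
`exp (4 t)` and have nonzero Lagrange bracket obstruct essential self-adjointness. -/
theorem not_essentiallySelfAdjoint_of_solutions {n ℓ : ℕ} {c : ℝ} {u v : ℕ → ℝ → ℂ}
    (hu : IsJet u) (hv : IsJet v) (hcu : ContDiff ℝ (⊤ : ℕ∞) (u 0))
    (hcv : ContDiff ℝ (⊤ : ℕ∞) (v 0)) (hu0 : ∀ t, jetOp (coefA n ℓ) (coefK n ℓ c) u t = 0)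
    (hv0 : ∀ t, jetOp (coefA n ℓ) (coefK n ℓ c) v t = 0)
    (hOu : ∃ δ > 0, (fun t => Real.exp (2 * t) * u 0 t) =O[atBot] fun t => Real.exp (δ * t))
    (hOv : ∃ δ > 0, (fun t => Real.exp (2 * t) * v 0 t) =O[atBot] fun t => Real.exp (δ * t))
    (hne : bracket (coefA n ℓ) u v 0 ≠ 0) : ¬ EssentiallySelfAdjoint (tau2nlOp n ℓ c) := by
  have ju := isJet_cutJet hcu
  have jv := isJet_cutJet hcv
  have cu := ju.continuous_jetOp (coefA n ℓ) (coefK n ℓ c)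
  have cv := jv.continuous_jetOp (coefA n ℓ) (coefK n ℓ c)
  have su := hasCompactSupport_jetOp_cutJet hu hu0
  have sv := hasCompactSupport_jetOp_cutJet hv hv0
  have mem : ∀ {f : ℝ → ℂ}, Continuous f → HasCompactSupport f →
      MemLp (fun t => Real.exp (-2 * t) * f t) 2 := fun hf hs =>
    Continuous.memLp_of_hasCompactSupport (by fun_prop) hs.mul_left
  refine not_essentiallySelfAdjoint ju jv (memLp_exp_mul_cutJet hu hcu hOu) (mem cu su)
    (memLp_exp_mul_cutJet hv hcv hOv) (mem cv sv) fun h => hne ?_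
  have iu : Integrable fun t => jetOp (coefA n ℓ) (coefK n ℓ c) (cutJet u) t * cutJet v 0 t :=
    (cu.mul (jv.continuous 0)).integrable_of_hasCompactSupport su.mul_right
  have iv : Integrable fun t => cutJet u 0 t * jetOp (coefA n ℓ) (coefK n ℓ c) (cutJet v) t :=
    ((ju.continuous 0).mul cv).integrable_of_hasCompactSupport sv.mul_left
  rw [← sub_eq_zero, ← integral_sub iu iv, ← setIntegral_eq_integral_of_forall_compl_eq_zero
    (s := Icc 0 3) (fun t ht => by rw [jetOp_cutJet hu hu0 ht, jetOp_cutJet hv hv0 ht]; simp),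
    integral_Icc_eq_integral_Ioc, ← intervalIntegral.integral_of_le (by norm_num),
    intervalIntegral.integral_eq_sub_of_hasDerivAt
      (fun t _ => hasDerivAt_bracket (coefA n ℓ) (coefK n ℓ c) ju jv t)
      ((iu.sub iv).intervalIntegrable)] at h
  have h3 : bracket (coefA n ℓ) (cutJet u) (cutJet v) 3 = 0 := by
    simp [bracket, cutJet_of_gt _ _ (show (2 : ℝ) < 3 by norm_num)]
  rw [h3, zero_sub, neg_eq_zero] at h
  rw [← h]
  simp only [bracket, cutJet_of_lt hu _ one_pos, cutJet_of_lt hv _ one_pos]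

lemma jetOp_expJet (a K : ℝ) (q α β : ℂ) (t : ℝ) :
    jetOp a K (expJet q α β) t = ((q ^ 4 - a * q ^ 2 + K) * (α + β * t)
      + (4 * q ^ 3 - 2 * a * q) * β) * Complex.exp (q * t) := by
  simp only [jetOp, expJet]
  ring

/-- A root of `z⁴ - a z² + K` in the strip `|re z| < 2` obstructs essential self-adjointness. -/
theorem not_essentiallySelfAdjoint_of_root {n ℓ : ℕ} {c : ℝ} {q : ℂ} (hq : |q.re| < 2)
    (h0 : q ^ 4 - coefA n ℓ * q ^ 2 + coefK n ℓ c = 0) :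
    ¬ EssentiallySelfAdjoint (tau2nlOp n ℓ c) := by
  have hq' : |(-q).re| < 2 := by simpa using hq
  have ha : (coefA n ℓ : ℂ) ≠ 0 := by
    have : 0 < coefA n ℓ := by unfold coefA; positivity
    exact_mod_cast this.ne'
  have main : ∀ {p α₁ β₁ α₂ β₂ : ℂ}, |p.re| < 2 →
      (∀ t, jetOp (coefA n ℓ) (coefK n ℓ c) (expJet q α₁ β₁) t = 0) →
      (∀ t, jetOp (coefA n ℓ) (coefK n ℓ c) (expJet p α₂ β₂) t = 0) →
      bracket (coefA n ℓ) (expJet q α₁ β₁) (expJet p α₂ β₂) 0 ≠ 0 →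
      ¬ EssentiallySelfAdjoint (tau2nlOp n ℓ c) := fun hp h1 h2 =>
    not_essentiallySelfAdjoint_of_solutions (isJet_expJet _ _ _) (isJet_expJet _ _ _)
      (contDiff_expJet _ _ _) (contDiff_expJet _ _ _) h1 h2 (isBigO_expJet hq _ _)
      (isBigO_expJet hp _ _)
  rcases eq_or_ne q 0 with rfl | hq0
  · refine main (p := 0) (α₁ := 1) (β₁ := 0) (α₂ := 0) (β₂ := 1) hq (fun t => ?_) (fun t => ?_) ?_
    · rw [jetOp_expJet, h0]; simp
    · rw [jetOp_expJet, h0]; simp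
    · simp [bracket, expJet, ha]
  rcases eq_or_ne (2 * q ^ 2) (coefA n ℓ : ℂ) with hd | hd
  · refine main (p := -q) (α₁ := 1) (β₁ := 0) (α₂ := 0) (β₂ := 1) hq' (fun t => ?_) (fun t => ?_) ?_
    · rw [jetOp_expJet, h0]; simp
    · rw [jetOp_expJet, ← hd]
      rw [← hd] at h0
      linear_combination (t * Complex.exp (-q * t)) * h0
    · have : q ^ 2 ≠ 0 := pow_ne_zero 2 hq0
      simp only [bracket, expJet, ← hd]
      intro h
      apply this
      simp at h
      linear_combination (-1 / 4) * h
  · refine main (p := -q) (α₁ := 1) (β₁ := 0) (α₂ := 1) (β₂ := 0) hq' (fun t => ?_) (fun t => ?_) ?_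
    · rw [jetOp_expJet, h0]; simp
    · rw [jetOp_expJet]
      linear_combination (Complex.exp (-q * t)) * h0
    · simp only [bracket, expJet]
      intro h
      simp at h
      refine hd (sub_eq_zero.1 ((mul_eq_zero_iff_left hq0).1 ?_))
      linear_combination (1 / 2) * h

lemma gamma2_eq (n ℓ : ℕ) : gamma2 n ℓ =
    if (((n : ℝ) + 2 * ℓ - 2) / 2) ^ 2 ≤ 3 then 48 - 12 * (((n : ℝ) + 2 * ℓ - 2) / 2) ^ 2
    else -(((((n : ℝ) + 2 * ℓ - 2) / 2) ^ 2 - 1) * ((((n : ℝ) + 2 * ℓ - 2) / 2) ^ 2 - 9)) := by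
  have h : ((n : ℝ) + 2 * ℓ - 1) * ((n : ℝ) + 2 * ℓ - 3) ≤ 11 ↔
      (((n : ℝ) + 2 * ℓ - 2) / 2) ^ 2 ≤ 3 := by
    constructor <;> intro h <;> nlinarith
  simp only [gamma2, h]
  split_ifs <;> ring

lemma exists_sq_eq_re_nonneg (z : ℂ) : ∃ q : ℂ, q ^ 2 = z ∧ 0 ≤ q.re := by
  obtain ⟨q, rfl⟩ := IsAlgClosed.exists_pow_nat_eq z (n := 2) two_pos
  rcases le_total 0 q.re with h | h
  · exact ⟨q, rfl, h⟩
  · exact ⟨-q, by ring, by simpa using h⟩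

lemma norm_sq_add_re_sq (q : ℂ) : ‖q ^ 2‖ + (q ^ 2).re = 2 * q.re ^ 2 := by
  rw [norm_pow, Complex.sq_norm, Complex.normSq_apply, pow_two q, Complex.mul_re]
  ring

lemma exists_root {s c : ℝ} (hc : c < if s ≤ 3 then 48 - 12 * s else -((s - 1) * (s - 9))) :
    ∃ q : ℂ, |q.re| < 2 ∧
      q ^ 4 - ((2 + 2 * s : ℝ) : ℂ) * q ^ 2 + (((1 - s) ^ 2 + c : ℝ) : ℂ) = 0 := by
  suffices h : ∃ z : ℂ, ‖z‖ + z.re < 8 ∧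
      z ^ 2 - ((2 + 2 * s : ℝ) : ℂ) * z + (((1 - s) ^ 2 + c : ℝ) : ℂ) = 0 by
    obtain ⟨z, hz, h0⟩ := h
    obtain ⟨q, rfl, hq⟩ := exists_sq_eq_re_nonneg z
    refine ⟨q, ?_, by rw [← h0]; ring⟩
    rw [norm_sq_add_re_sq] at hz
    rw [abs_lt]
    constructor <;> nlinarith
  rcases le_total c (4 * s) with h | h
  · obtain ⟨r, hr0, hr⟩ : ∃ r : ℝ, 0 ≤ r ∧ r ^ 2 = 4 * s - c :=
      ⟨_, Real.sqrt_nonneg _, Real.sq_sqrt (by linarith)⟩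
    refine ⟨((1 + s - r : ℝ) : ℂ), ?_, ?_⟩
    · have : 1 + s - r < 4 := by
        split_ifs at hc with hs
        · by_contra! hh
          nlinarith
        · by_contra! hh
          nlinarith
      rw [Complex.norm_real, Complex.ofReal_re, Real.norm_eq_abs]
      rcases abs_cases (1 + s - r) with h | h <;> linarith
    · norm_cast
      linear_combination hr
  · obtain ⟨r, hr⟩ : ∃ r : ℝ, r ^ 2 = c - 4 * s := ⟨_, Real.sq_sqrt (by linarith)⟩
    have hs : s ≤ 3 := by
      by_contra hs
      rw [if_neg hs] at hc
      nlinarith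
    rw [if_pos hs] at hc
    refine ⟨⟨1 + s, r⟩, ?_, ?_⟩
    · have : ‖(⟨1 + s, r⟩ : ℂ)‖ < 7 - s := by
        refine lt_of_pow_lt_pow_left₀ 2 (by linarith) ?_
        rw [Complex.sq_norm, Complex.normSq_mk]
        nlinarith
      simp only
      linarith
    · apply Complex.ext
      · simp [pow_two]
        linear_combination -hr
      · simp [pow_two]
        ring

lemma two_le_of_root {s c : ℝ} (hs0 : 0 ≤ s)
    (hc : (if s ≤ 3 then 48 - 12 * s else -((s - 1) * (s - 9))) ≤ c) {q : ℂ} (hq : 0 ≤ q.re)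
    (h0 : q ^ 4 - ((2 + 2 * s : ℝ) : ℂ) * q ^ 2 + (((1 - s) ^ 2 + c : ℝ) : ℂ) = 0) :
    2 ≤ q.re := by
  by_contra! hlt
  obtain ⟨x, y⟩ := q
  simp only at hq hlt
  have hre := congrArg Complex.re h0
  have him := congrArg Complex.im h0
  rw [show (⟨x, y⟩ : ℂ) ^ 4 = (⟨x, y⟩ * ⟨x, y⟩) * (⟨x, y⟩ * ⟨x, y⟩) by ring, pow_two] at hre him
  simp only [Complex.add_re, Complex.sub_re, Complex.mul_re, Complex.mul_im, Complex.add_im,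
    Complex.sub_im, Complex.ofReal_re, Complex.ofReal_im, Complex.zero_re, Complex.zero_im]
    at hre him
  have hx : x ^ 2 < 4 := by nlinarith
  have hY : x * y * (2 * (x ^ 2 - y ^ 2) - (2 + 2 * s)) = 0 := by linear_combination him / 2
  rcases mul_eq_zero.1 hY with h | h
  · have hX : (x ^ 2 - y ^ 2) ^ 2 - (2 + 2 * s) * (x ^ 2 - y ^ 2) + (1 - s) ^ 2 + c = 0 := by
      linear_combination hre + 4 * x * y * h
    have hX4 : x ^ 2 - y ^ 2 < 4 := by nlinarith [sq_nonneg y]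
    generalize x ^ 2 - y ^ 2 = X at hX hX4
    split_ifs at hc with hs
    · nlinarith [sq_nonneg (X - 1 - s)]
    · nlinarith
  · have hy : y ^ 2 = x ^ 2 - 1 - s := by linear_combination -h / 2
    have hs : s < 3 := by nlinarith [sq_nonneg y]
    rw [if_pos hs.le] at hc
    have : c = 4 * s + 4 * x ^ 2 * (x ^ 2 - 1 - s) := by
      rw [← hy]
      have hy4 : y ^ 4 = (x ^ 2 - 1 - s) ^ 2 := by rw [← hy]; ring
      linear_combination hre - hy4 + (2 * x ^ 2 - (2 + 2 * s)) * hy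
    nlinarith [sq_nonneg y, sq_nonneg x]

lemma exists_factorization (a K : ℂ) : ∃ q₁ q₂ : ℂ, 0 ≤ q₁.re ∧ 0 ≤ q₂.re ∧
    a = q₁ ^ 2 + q₂ ^ 2 ∧ K = q₁ ^ 2 * q₂ ^ 2 := by
  obtain ⟨r, hr, -⟩ := exists_sq_eq_re_nonneg (a ^ 2 - 4 * K)
  obtain ⟨q₁, h₁, p₁⟩ := exists_sq_eq_re_nonneg ((a + r) / 2)
  obtain ⟨q₂, h₂, p₂⟩ := exists_sq_eq_re_nonneg ((a - r) / 2)
  refine ⟨q₁, q₂, p₁, p₂, by rw [h₁, h₂]; ring, ?_⟩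
  rw [h₁, h₂]
  linear_combination hr / 4

end EulerODE

theorem stmt9 (n : ℕ) (hn : 2 ≤ n) (ℓ : ℕ) (c : ℝ) :
    EssentiallySelfAdjoint (tau2nlOp n ℓ c) ↔ gamma2 n ℓ ≤ c := by
  rw [EulerODE.gamma2_eq]
  constructor
  · intro h
    by_contra! hc
    obtain ⟨q, hq, h0⟩ := EulerODE.exists_root hc
    exact EulerODE.not_essentiallySelfAdjoint_of_root hq h0 h
  · intro hc
    obtain ⟨q₁, q₂, p₁, p₂, ha, hK⟩ := EulerODE.exists_factorization
      (EulerODE.coefA n ℓ) (EulerODE.coefK n ℓ c)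
    refine EulerODE.essentiallySelfAdjoint_of_re
      (EulerODE.two_le_of_root (sq_nonneg _) hc p₁ ?_)
      (EulerODE.two_le_of_root (sq_nonneg _) hc p₂ ?_) ha hK <;>
    · change _ ^ 4 - (EulerODE.coefA n ℓ : ℂ) * _ + (EulerODE.coefK n ℓ c : ℂ) = 0
      rw [ha, hK]
      ring
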